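/- arXiv:math/0512636 — 6 statements merged into one kernel-verified Lean document; each statement's English description precedes it below -/
import Mathlib

section
/- Let f : {0,1}^n → {0,1} be a monotone (coordinatewise nondecreasing) Boolean function with expectation μ = E f > 0, let 0 ≤ r ≤ n, let g(x) be the average of f over all points agreeing with x in the first r coordinates, and let h = f − g. If E[h²] ≤ μ − 2μ², then Pr[ f(x) = 1 | x_1 = ⋯ = x_r = 1 ] ≥ 2μ. -/
open Finset

/-- Expectation with respect to the uniform measure on the discrete cube `{0,1}^n`. -/
noncomputable def cubeE {n : ℕ} (f : (Fin n → Bool) → ℝ) : ℝ :=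
  (∑ x : Fin n → Bool, f x) / 2 ^ n

/-- `x ⊕ e_i` : flip the `i`-th coordinate of `x`. -/
def flipAt {n : ℕ} (x : Fin n → Bool) (i : Fin n) : Fin n → Bool :=
  Function.update x i (!x i)

/-- Influence of the `i`-th variable of a Boolean function,
`I_i(f) = Pr_x[f(x) ≠ f(x ⊕ e_i)]` under the uniform measure. -/
noncomputable def infl {n : ℕ} (f : (Fin n → Bool) → Bool) (i : Fin n) : ℝ :=
  cubeE (fun x => if f x ≠ f (flipAt x i) then 1 else 0)

/-- Expectation of a Boolean function under the uniform measure. -/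
noncomputable def meanB {n : ℕ} (f : (Fin n → Bool) → Bool) : ℝ :=
  cubeE (fun x => if f x then 1 else 0)

/-- Conditional expectation given the first `j` coordinates: `condE f j x` is the
average of `f` over all `y` agreeing with `x` in the first `j` coordinates. -/
noncomputable def condE {n : ℕ} (f : (Fin n → Bool) → ℝ) (j : ℕ) (x : Fin n → Bool) : ℝ :=
  (∑ y : Fin n → Bool, if ∀ k : Fin n, (k : ℕ) < j → y k = x k then f y else 0) / 2 ^ (n - j)

/-- The Dirichlet form `E(f,f) = E_x Σ_i (f(x) - f(x ⊕ e_i))²`. -/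
noncomputable def energy {n : ℕ} (f : (Fin n → Bool) → ℝ) : ℝ :=
  cubeE (fun x => ∑ i : Fin n, (f x - f (flipAt x i)) ^ 2)

/-- Entropy of a nonnegative function: `Ent(g) = E[g log g] - E g · log E g`
(the convention `0 log 0 = 0` holds since `Real.log 0 = 0`). -/
noncomputable def ent {n : ℕ} (g : (Fin n → Bool) → ℝ) : ℝ :=
  cubeE (fun x => g x * Real.log (g x)) - cubeE g * Real.log (cubeE g)

/-! Write `g = condE f r`. Conditional expectation is an orthogonal projection, so
`E[h²] = E[f²] - E[f g] = μ - E[f g]`. Since `f` is monotone, so is `g`, and hence `g` is at most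
its value `M` at the all-ones point, which is the conditional probability in question. Therefore
`μ - E[h²] = E[f g] ≤ μ M`, and the bound on `E[h²]` turns this into `2 μ² ≤ μ M`. -/

lemma monotone_boole {α R : Type*} [Preorder α] [Preorder R] [Zero R] [One R] [ZeroLEOneClass R]
    {f : α → Bool} (hf : Monotone f) : Monotone fun x => if f x then (1 : R) else 0 := by
  intro x y hxy
  have f_imp : f x → f y := hf hxy
  dsimp only
  split_ifs <;> simp_all

section Expectation

variable {n : ℕ} (F G : (Fin n → Bool) → ℝ)

lemma cubeE_sub : cubeE (fun x => F x - G x) = cubeE F - cubeE G := by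
  simp only [cubeE, sum_sub_distrib, sub_div]

lemma cubeE_mul_const (c : ℝ) : cubeE (fun x => F x * c) = cubeE F * c := by
  rw [cubeE, cubeE, ← sum_mul, div_mul_eq_mul_div]

variable {F G} in
lemma cubeE_mono (h : ∀ x, F x ≤ G x) : cubeE F ≤ cubeE G :=
  div_le_div_of_nonneg_right (sum_le_sum fun x _ => h x) (by positivity)

end Expectation

/-- The subcube of all points agreeing with `x` in the first `r` coordinates. These are the cells
over which `condE · r` averages. -/
def prefixCell {n : ℕ} (r : ℕ) (x : Fin n → Bool) : Finset (Fin n → Bool) :=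
  {y | ∀ k : Fin n, (k : ℕ) < r → y k = x k}

section PrefixCell

variable {n r : ℕ} {x y : Fin n → Bool}

lemma mem_prefixCell : y ∈ prefixCell r x ↔ ∀ k : Fin n, (k : ℕ) < r → y k = x k := by
  simp only [prefixCell, mem_filter_univ]

lemma mem_prefixCell_comm : y ∈ prefixCell r x ↔ x ∈ prefixCell r y := by
  simp only [mem_prefixCell, eq_comm]

lemma prefixCell_eq_of_mem (h : y ∈ prefixCell r x) : prefixCell r y = prefixCell r x := by
  rw [mem_prefixCell] at h
  ext z
  simp +contextual only [mem_prefixCell, h]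

lemma prefixCell_eq_piFinset (r : ℕ) (x : Fin n → Bool) :
    prefixCell r x = Fintype.piFinset fun k : Fin n => if (k : ℕ) < r then {x k} else univ := by
  ext y
  rw [mem_prefixCell, Fintype.mem_piFinset]
  refine forall_congr' fun k => ?_
  split_ifs with hk <;> simp [hk]

lemma card_prefixCell (r : ℕ) (x : Fin n → Bool) : #(prefixCell r x) = 2 ^ (n - r) := by
  have card_free : #{k : Fin n | ¬ (k : ℕ) < r} = n - r := by
    rw [filter_not, card_sdiff_of_subset (filter_subset _ _), card_fin, Fin.card_filter_val_lt]
    omega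
  simp only [prefixCell_eq_piFinset, Fintype.card_piFinset, apply_ite card, card_singleton,
    card_univ, Fintype.card_bool, prod_ite, prod_const_one, one_mul, prod_const, card_free]

/-- The point with the first `r` coordinates of `x` and the remaining coordinates of `y`. For
fixed `x` it transports any prefix cell to the cell of `x`. -/
def overwritePrefix (r : ℕ) (x y : Fin n → Bool) : Fin n → Bool :=
  fun k => if (k : ℕ) < r then x k else y k

lemma overwritePrefix_mem_prefixCell (r : ℕ) (x y : Fin n → Bool) :
    overwritePrefix r x y ∈ prefixCell r x :=
  mem_prefixCell.2 fun _ hk => if_pos hk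

lemma overwritePrefix_overwritePrefix (r : ℕ) (x y z : Fin n → Bool) :
    overwritePrefix r x (overwritePrefix r y z) = overwritePrefix r x z := by
  ext k
  simp +contextual only [overwritePrefix, ite_false]

lemma overwritePrefix_eq_self (h : y ∈ prefixCell r x) : overwritePrefix r x y = y := by
  ext k
  exact ite_eq_right_iff.2 fun hk => (mem_prefixCell.1 h k hk).symm

lemma overwritePrefix_mono_left (r : ℕ) (y : Fin n → Bool) :
    Monotone fun x => overwritePrefix r x y :=
  fun _ _ hx k => by
    dsimp only [overwritePrefix]
    split_ifs
    exacts [hx k, le_rfl]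

lemma sum_prefixCell_comp_overwritePrefix {M : Type*} [AddCommMonoid M]
    (F : (Fin n → Bool) → M) (r : ℕ) (x x' : Fin n → Bool) :
    ∑ y ∈ prefixCell r x, F (overwritePrefix r x' y) = ∑ y ∈ prefixCell r x', F y :=
  sum_nbij' (overwritePrefix r x') (overwritePrefix r x)
    (fun y _ => overwritePrefix_mem_prefixCell r x' y)
    (fun y _ => overwritePrefix_mem_prefixCell r x y)
    (fun y hy => by rw [overwritePrefix_overwritePrefix, overwritePrefix_eq_self hy])
    (fun y hy => by rw [overwritePrefix_overwritePrefix, overwritePrefix_eq_self hy])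
    (fun _ _ => rfl)

end PrefixCell

section CondE

variable {n : ℕ}

lemma condE_eq_sum_prefixCell (F : (Fin n → Bool) → ℝ) (r : ℕ) (x : Fin n → Bool) :
    condE F r x = (∑ y ∈ prefixCell r x, F y) / 2 ^ (n - r) := by
  rw [condE, prefixCell, sum_filter]

lemma condE_eq_of_mem_prefixCell (F : (Fin n → Bool) → ℝ) {r : ℕ} {x y : Fin n → Bool}
    (h : y ∈ prefixCell r x) : condE F r y = condE F r x := by
  rw [condE_eq_sum_prefixCell, condE_eq_sum_prefixCell, prefixCell_eq_of_mem h]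

lemma condE_condE (F : (Fin n → Bool) → ℝ) (r : ℕ) : condE (condE F r) r = condE F r := by
  ext x
  rw [condE_eq_sum_prefixCell, sum_congr rfl fun y hy => condE_eq_of_mem_prefixCell F hy,
    sum_const, card_prefixCell, nsmul_eq_mul, Nat.cast_pow, Nat.cast_ofNat,
    mul_div_cancel_left₀ _ (by positivity)]

lemma cubeE_mul_condE_comm (F G : (Fin n → Bool) → ℝ) (r : ℕ) :
    cubeE (fun x => F x * condE G r x) = cubeE (fun x => condE F r x * G x) := by
  simp only [cubeE, condE_eq_sum_prefixCell, mul_div_assoc', div_mul_eq_mul_div, ← sum_div,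
    mul_sum, sum_mul]
  rw [sum_comm' (t' := univ) (s' := prefixCell r) fun x y => by
    simp only [mem_univ, true_and, and_true, mem_prefixCell_comm]]

lemma cubeE_condE_sq (F : (Fin n → Bool) → ℝ) (r : ℕ) :
    cubeE (fun x => condE F r x ^ 2) = cubeE (fun x => F x * condE F r x) := by
  simp only [sq]
  rw [← cubeE_mul_condE_comm, condE_condE]

lemma cubeE_sub_condE_sq (F : (Fin n → Bool) → ℝ) (r : ℕ) :
    cubeE (fun x => (F x - condE F r x) ^ 2) =
      cubeE (fun x => F x ^ 2) - cubeE (fun x => F x * condE F r x) := by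
  have expand_sq (x) : (F x - condE F r x) ^ 2 =
      (F x ^ 2 - F x * condE F r x) - (F x * condE F r x - condE F r x ^ 2) := by ring
  simp only [expand_sq, cubeE_sub, cubeE_condE_sq, sub_self, sub_zero]

lemma monotone_condE {F : (Fin n → Bool) → ℝ} (hF : Monotone F) (r : ℕ) :
    Monotone (condE F r) := by
  intro x x' hx
  have sum_le : ∑ y ∈ prefixCell r x, F y ≤ ∑ y ∈ prefixCell r x', F y := calc
    ∑ y ∈ prefixCell r x, F y = ∑ y ∈ prefixCell r x, F (overwritePrefix r x y) :=
      sum_congr rfl fun y hy => by rw [overwritePrefix_eq_self hy]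
    _ ≤ ∑ y ∈ prefixCell r x, F (overwritePrefix r x' y) :=
      sum_le_sum fun y _ => hF (overwritePrefix_mono_left r y hx)
    _ = ∑ y ∈ prefixCell r x', F y := sum_prefixCell_comp_overwritePrefix F r x x'
  rw [condE_eq_sum_prefixCell, condE_eq_sum_prefixCell]
  gcongr

lemma cubeE_sq_sub_cubeE_sub_condE_sq_le {F : (Fin n → Bool) → ℝ} (hF : Monotone F)
    (hF_nonneg : ∀ x, 0 ≤ F x) (r : ℕ) :
    cubeE (fun x => F x ^ 2) - cubeE (fun x => (F x - condE F r x) ^ 2) ≤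
      cubeE F * condE F r ⊤ := by
  rw [cubeE_sub_condE_sq, sub_sub_cancel, ← cubeE_mul_const]
  exact cubeE_mono fun x => mul_le_mul_of_nonneg_left (monotone_condE hF r le_top) (hF_nonneg x)

end CondE

/-- If `f` is a monotone Boolean function with expectation `μ > 0`, `g` is the
conditional expectation of `f` given the first `r` coordinates and `h = f - g`
satisfies `E[h²] ≤ μ - 2μ²`, then `Pr[f(x) = 1 | x_1 = ⋯ = x_r = 1] ≥ 2μ`. -/
theorem restriction_expectation_ge {n : ℕ} (f : (Fin n → Bool) → Bool)
    (hmono : ∀ x y : Fin n → Bool, (∀ k, x k ≤ y k) → f x ≤ f y)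
    (hμ : 0 < meanB f) (r : ℕ) (hr : r ≤ n)
    (hclose : cubeE (fun x => ((if f x then (1 : ℝ) else 0) -
        condE (fun y => if f y then (1 : ℝ) else 0) r x) ^ 2) ≤
      meanB f - 2 * (meanB f) ^ 2) :
    (∑ x : Fin n → Bool,
        if (∀ k : Fin n, (k : ℕ) < r → x k = true) ∧ f x = true then (1 : ℝ) else 0) /
      2 ^ (n - r) ≥ 2 * meanB f := by
  let F : (Fin n → Bool) → ℝ := fun x => if f x then 1 else 0
  have F_mono : Monotone F := monotone_boole fun x y hxy => hmono x y hxy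
  have F_nonneg (x) : 0 ≤ F x := by positivity
  have F_sq (x) : F x ^ 2 = F x := by simp [F]
  have mean_sub_le : meanB f - cubeE (fun x => (F x - condE F r x) ^ 2) ≤
      meanB f * condE F r ⊤ := by
    have sq_sub_le := cubeE_sq_sub_cubeE_sub_condE_sq_le F_mono F_nonneg r
    simp only [F_sq] at sq_sub_le
    exact sq_sub_le
  have mean_mul_le : meanB f * (2 * meanB f) ≤ meanB f * condE F r ⊤ := by linarith
  have two_mul_mean_le : 2 * meanB f ≤ condE F r ⊤ := le_of_mul_le_mul_left mean_mul_le hμ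
  simp only [condE, F, ← ite_and] at two_mul_mean_le
  exact two_mul_mean_le
end

section
/- Let 0 < p < 1/2, let μ_p be the product measure on {0,1}^n with each coordinate equal to 1 with probability p, and let f : {0,1}^n → {0,1} be a non-constant Boolean function. Let I_i = Pr_{x∼μ_p}[f(x) ≠ f(x⊕e_i)], let σ² = E_{μ_p}[f²] − (E_{μ_p} f)² > 0, and let C(p) = ((1−2p)/(p(1−p))) · 1/(log(1−p) − log p). Then Σ_{i=1}^n I_i² ≥ ( σ² / (4 p² (1−p)²) ) · exp( − (Σ_{i=1}^n I_i) / (C(p) σ²) ). -/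
open Finset

/-- Weight of the point `x` under the product measure `μ_p` on `{0,1}^n` in which each
coordinate independently equals `1` with probability `p`. -/
noncomputable def pWt {n : ℕ} (p : ℝ) (x : Fin n → Bool) : ℝ :=
  ∏ k : Fin n, if x k then p else 1 - p

/-- Expectation with respect to `μ_p`. -/
noncomputable def pE {n : ℕ} (p : ℝ) (f : (Fin n → Bool) → ℝ) : ℝ :=
  ∑ x : Fin n → Bool, pWt p x * f x

/-- Influence of the `i`-th variable under `μ_p`: `I_i = Pr_{x∼μ_p}[f(x) ≠ f(x⊕e_i)]`. -/
noncomputable def pInfl {n : ℕ} (p : ℝ) (f : (Fin n → Bool) → Bool) (i : Fin n) : ℝ :=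
  pE p (fun x => if f x ≠ f (flipAt x i) then 1 else 0)

/-- The optimal logarithmic Sobolev constant of `({0,1}^n, μ_p)`:
`C(p) = ((1-2p)/(p(1-p))) · 1/(log(1-p) - log p)`. -/
noncomputable def lsConst (p : ℝ) : ℝ :=
  (1 - 2 * p) / (p * (1 - p)) * (1 / (Real.log (1 - p) - Real.log p))

/-!
Following Falik and Samorodnitsky, write `g - E g` as the sum of the martingale differences `d_i`
obtained by averaging out the coordinates one at a time. The logarithmic Sobolev inequality
bounds `∑ i, Ent(d_i²)` by the Dirichlet energy of `g`, because the energies of the `d_i` add up to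
at most that of `g`. Conversely `Ent(d_i²)` is large unless `E |d_i|` is, and `E |d_i|` is at most
the `L¹` norm of the `i`-th coordinate Laplacian of `g`, a multiple of `I_i` when `g` is Boolean.

The logarithmic Sobolev inequality tensorizes from a two-point space. There it says, for a
density equal to `u / p` and `(1 - u) / (1 - p)`, that `h(u) - c √(u (1 - u))` is minimal at
`u = p`, where `h` is the binary entropy. In terms of `t = log ((1 - u) / u) / 2` its derivative is
`2 t - c sinh t`, so the claim comes down to the monotonicity of `sinh t / t`.
-/

/-! ### The two-point logarithmic Sobolev inequality -/

lemma monotoneOn_sinh_div_self : MonotoneOn (fun t : ℝ => Real.sinh t / t) (Set.Ioi 0) := by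
  have hconv : ConvexOn ℝ (Set.Ici 0) Real.sinh := by
    refine MonotoneOn.convexOn_of_deriv (convex_Ici 0) Real.continuous_sinh.continuousOn
      Real.differentiable_sinh.differentiableOn ?_
    rw [Real.deriv_sinh, interior_Ici]
    intro s (hs : 0 < s) t (ht : 0 < t) hst
    rwa [Real.cosh_le_cosh, abs_of_pos hs, abs_of_pos ht]
  intro s (hs : 0 < s) t (ht : 0 < t) hst
  simpa using hconv.secant_mono (Set.mem_Ici.2 le_rfl) hs.le ht.le hs.ne' ht.ne' hst

/-- Half the logarithm of the odds `(1 - u) / u`, in which the derivatives of the binary entropy and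
of `√(u (1 - u))` become `2 t` and `sinh t`. -/
noncomputable def halfLogOdds (u : ℝ) : ℝ := (Real.log (1 - u) - Real.log u) / 2

lemma sinh_halfLogOdds {u : ℝ} (hu₀ : 0 < u) (hu₁ : u < 1) :
    Real.sinh (halfLogOdds u) = (1 - 2 * u) / (2 * √(u * (1 - u))) := by
  have hv : 0 < 1 - u := sub_pos.2 hu₁
  have hexp : Real.exp (halfLogOdds u) = √(1 - u) / √u := by
    rw [halfLogOdds, sub_div, Real.exp_sub, ← Real.log_sqrt hv.le, ← Real.log_sqrt hu₀.le,
      Real.exp_log (Real.sqrt_pos.2 hv), Real.exp_log (Real.sqrt_pos.2 hu₀)]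
  rw [Real.sinh_eq, Real.exp_neg, hexp, Real.sqrt_mul hu₀.le]
  field_simp
  rw [Real.sq_sqrt hu₀.le, Real.sq_sqrt hv.le]
  ring

lemma halfLogOdds_antitoneOn : AntitoneOn halfLogOdds (Set.Ioo 0 1) := by
  intro u hu v hv huv
  have hlog := Real.log_le_log hu.1 huv
  have hlog' := Real.log_le_log (sub_pos.2 hv.2) (sub_le_sub_left huv 1)
  unfold halfLogOdds
  linarith

lemma halfLogOdds_pos {u : ℝ} (hu₀ : 0 < u) (hu : u < 1 / 2) : 0 < halfLogOdds u := by
  have := Real.log_lt_log hu₀ (by linarith : u < 1 - u)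
  unfold halfLogOdds
  linarith

/-- The binary entropy minus `c` times the standard deviation of a Bernoulli variable. -/
noncomputable def entropyGap (c u : ℝ) : ℝ := Real.binEntropy u - c * √(u * (1 - u))

lemma continuous_entropyGap (c : ℝ) : Continuous (entropyGap c) := by
  unfold entropyGap
  fun_prop

lemma entropyGap_one_sub (c u : ℝ) : entropyGap c (1 - u) = entropyGap c u := by
  rw [entropyGap, entropyGap, Real.binEntropy_one_sub, sub_sub_cancel, mul_comm u]

lemma hasDerivAt_entropyGap (c : ℝ) {u : ℝ} (hu₀ : 0 < u) (hu₁ : u < 1) :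
    HasDerivAt (entropyGap c) (2 * halfLogOdds u - c * Real.sinh (halfLogOdds u)) u := by
  have hvar : HasDerivAt (fun u : ℝ => u * (1 - u)) (1 - 2 * u) u :=
    ((hasDerivAt_id u).mul ((hasDerivAt_id u).const_sub 1)).congr_deriv (by simp only [id]; ring)
  have hsqrt := hvar.sqrt (mul_pos hu₀ (sub_pos.2 hu₁)).ne'
  refine ((Real.hasDerivAt_binEntropy hu₀.ne' hu₁.ne).sub (hsqrt.const_mul c)).congr_deriv ?_
  rw [sinh_halfLogOdds hu₀ hu₁, halfLogOdds]
  ring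

lemma antitoneOn_entropyGap {p : ℝ} (hp₀ : 0 < p) (hp : p < 1 / 2) :
    AntitoneOn (entropyGap (2 * halfLogOdds p / Real.sinh (halfLogOdds p))) (Set.Icc 0 p) := by
  have hderiv : ∀ u ∈ Set.Ioo 0 p, HasDerivAt _ _ u := fun u hu =>
    hasDerivAt_entropyGap (2 * halfLogOdds p / Real.sinh (halfLogOdds p)) hu.1 (by linarith [hu.2])
  refine antitoneOn_of_deriv_nonpos (convex_Icc 0 p) (continuous_entropyGap _).continuousOn ?_ ?_
  all_goals rw [interior_Icc]
  · exact fun u hu => (hderiv u hu).differentiableAt.differentiableWithinAt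
  · intro u hu
    have ht := halfLogOdds_pos hp₀ hp
    have htu := halfLogOdds_pos hu.1 (hu.2.trans hp)
    have hle := monotoneOn_sinh_div_self ht htu <| halfLogOdds_antitoneOn
      ⟨hu.1, by linarith [hu.2]⟩ ⟨hp₀, by linarith⟩ hu.2.le
    rw [(hderiv u hu).deriv, sub_nonpos, div_mul_eq_mul_div, le_div_iff₀ (Real.sinh_pos_iff.2 ht)]
    rw [div_le_div_iff₀ ht htu] at hle
    linarith

lemma monotoneOn_entropyGap {p : ℝ} (hp₀ : 0 < p) (hp : p < 1 / 2) :
    MonotoneOn (entropyGap (2 * halfLogOdds p / Real.sinh (halfLogOdds p)))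
      (Set.Icc p (1 / 2)) := by
  have hderiv : ∀ u ∈ Set.Ioo p (1 / 2), HasDerivAt _ _ u := fun u hu =>
    hasDerivAt_entropyGap (2 * halfLogOdds p / Real.sinh (halfLogOdds p))
      (hp₀.trans hu.1) (by linarith [hu.2])
  refine monotoneOn_of_deriv_nonneg (convex_Icc p _) (continuous_entropyGap _).continuousOn ?_ ?_
  all_goals rw [interior_Icc]
  · exact fun u hu => (hderiv u hu).differentiableAt.differentiableWithinAt
  · intro u hu
    have ht := halfLogOdds_pos hp₀ hp
    have htu := halfLogOdds_pos (hp₀.trans hu.1) hu.2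
    have hle := monotoneOn_sinh_div_self htu ht <| halfLogOdds_antitoneOn
      ⟨hp₀, by linarith⟩ ⟨hp₀.trans hu.1, by linarith [hu.2]⟩ hu.1.le
    rw [(hderiv u hu).deriv, sub_nonneg, div_mul_eq_mul_div, div_le_iff₀ (Real.sinh_pos_iff.2 ht)]
    rw [div_le_div_iff₀ htu ht] at hle
    linarith

lemma entropyGap_le_of_mem_Icc {p u : ℝ} (hp₀ : 0 < p) (hp : p < 1 / 2) (hu : u ∈ Set.Icc 0 1) :
    entropyGap (2 * halfLogOdds p / Real.sinh (halfLogOdds p)) p ≤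
      entropyGap (2 * halfLogOdds p / Real.sinh (halfLogOdds p)) u := by
  wlog huhalf : u ≤ 1 / 2 generalizing u
  · rw [← entropyGap_one_sub _ u]
    exact this ⟨sub_nonneg.2 hu.2, sub_le_self 1 hu.1⟩ (by linarith)
  rcases le_total u p with hup | hpu
  · exact antitoneOn_entropyGap hp₀ hp ⟨hu.1, hup⟩ ⟨hp₀.le, le_rfl⟩ hup
  · exact monotoneOn_entropyGap hp₀ hp ⟨le_rfl, hp.le⟩ ⟨hpu, huhalf⟩ hpu

/-- The entropy `E[G log G] - E[G] log E[G]` of the function on a two-point space that takes the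
values `a` and `b` with probabilities `p` and `1 - p`. -/
noncomputable def twoPointEnt (p a b : ℝ) : ℝ :=
  p * (a * Real.log a) + (1 - p) * (b * Real.log b) -
    (p * a + (1 - p) * b) * Real.log (p * a + (1 - p) * b)

lemma twoPointEnt_one_sub (p a b : ℝ) : twoPointEnt (1 - p) a b = twoPointEnt p b a := by
  simp only [twoPointEnt, sub_sub_cancel, add_comm]

lemma twoPointEnt_mul {m : ℝ} (hm : m ≠ 0) (p a b : ℝ) :
    twoPointEnt p (m * a) (m * b) = m * twoPointEnt p a b := by
  have hmul_log : ∀ x, m * x * Real.log (m * x) = m * (x * Real.log x) + m * x * Real.log m := by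
    intro x
    rcases eq_or_ne x 0 with rfl | hx
    · simp
    · rw [Real.log_mul hm hx]
      ring
  have hmean : p * (m * a) + (1 - p) * (m * b) = m * (p * a + (1 - p) * b) := by ring
  rw [twoPointEnt, twoPointEnt, hmean, hmul_log, hmul_log, hmul_log]
  ring

lemma twoPointEnt_density {p : ℝ} (hp₀ : p ≠ 0) (hp₁ : p ≠ 1) (u : ℝ) :
    twoPointEnt p (u / p) ((1 - u) / (1 - p)) =
      Real.binEntropy p - Real.binEntropy u + (u - p) * (Real.log (1 - p) - Real.log p) := by
  have hmul_log : ∀ {r : ℝ}, r ≠ 0 → ∀ x : ℝ,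
      r * (x / r * Real.log (x / r)) = x * Real.log x - x * Real.log r := by
    intro r hr x
    rcases eq_or_ne x 0 with rfl | hx
    · simp
    · rw [Real.log_div hx hr]
      field_simp
  have hq : 1 - p ≠ 0 := sub_ne_zero.2 hp₁.symm
  rw [twoPointEnt, hmul_log hp₀, hmul_log hq, mul_div_cancel₀ _ hp₀, mul_div_cancel₀ _ hq,
    add_sub_cancel, Real.log_one]
  simp only [Real.binEntropy_eq_negMulLog_add_negMulLog_one_sub, Real.negMulLog]
  ring

/-- `K` is an admissible constant in the logarithmic Sobolev inequality
`Ent(G) ≤ K E[(D √G)²]` on the two-point space with weights `p` and `1 - p`. -/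
def TwoPointLogSobolev (p K : ℝ) : Prop :=
  ∀ ⦃a b : ℝ⦄, 0 ≤ a → 0 ≤ b → twoPointEnt p a b ≤ K * (√a - √b) ^ 2

lemma TwoPointLogSobolev.nonneg {p K : ℝ} (h : TwoPointLogSobolev p K) (hp : p ∈ Set.Icc 0 1) :
    0 ≤ K := by
  have hent := h zero_le_one le_rfl
  have := Real.mul_log_nonpos hp.1 hp.2
  simp only [twoPointEnt, Real.log_one, Real.sqrt_one, Real.sqrt_zero, mul_zero, mul_one, add_zero,
    sub_zero, one_pow] at hent
  linarith

lemma TwoPointLogSobolev.one_sub {p K : ℝ} (h : TwoPointLogSobolev p K) :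
    TwoPointLogSobolev (1 - p) K := by
  intro a b ha hb
  rw [twoPointEnt_one_sub, sub_sq_comm]
  exact h hb ha

lemma TwoPointLogSobolev.of_density {p K : ℝ} (hp : p ∈ Set.Ioo 0 1)
    (h : ∀ u ∈ Set.Icc (0 : ℝ) 1, twoPointEnt p (u / p) ((1 - u) / (1 - p)) ≤
      K * (√(u / p) - √((1 - u) / (1 - p))) ^ 2) :
    TwoPointLogSobolev p K := by
  intro a b ha hb
  have hp₀ : 0 < p := hp.1
  have hq : 0 < 1 - p := sub_pos.2 hp.2
  have hpa : 0 ≤ p * a := mul_nonneg hp₀.le ha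
  have hqb : 0 ≤ (1 - p) * b := mul_nonneg hq.le hb
  rcases (add_nonneg hpa hqb).eq_or_lt with hm | hm
  · have ha0 : a = 0 := by nlinarith
    have hb0 : b = 0 := by nlinarith
    simp [twoPointEnt, ha0, hb0]
  · set m := p * a + (1 - p) * b
    set u := p * a / m
    have hu : 1 - u = (1 - p) * b / m := by
      rw [eq_div_iff hm.ne', sub_mul, one_mul, div_mul_cancel₀ _ hm.ne', add_sub_cancel_left]
    have hu₁ : 0 ≤ 1 - u := hu ▸ div_nonneg hqb hm.le
    have ha' : a = m * (u / p) := by simp only [u]; field_simp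
    have hb' : b = m * ((1 - u) / (1 - p)) := by rw [hu]; field_simp
    rw [ha', hb', twoPointEnt_mul hm.ne', Real.sqrt_mul hm.le, Real.sqrt_mul hm.le, ← mul_sub,
      mul_pow, Real.sq_sqrt hm.le, mul_left_comm]
    exact mul_le_mul_of_nonneg_left (h u ⟨div_nonneg hpa hm.le, sub_nonneg.1 hu₁⟩) hm.le

lemma inv_lsConst (p : ℝ) :
    (lsConst p)⁻¹ = p * (1 - p) * (Real.log (1 - p) - Real.log p) / (1 - 2 * p) := by
  rw [lsConst, mul_one_div, div_div, inv_div]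

lemma lsConst_one_sub (p : ℝ) : lsConst (1 - p) = lsConst p := by
  rw [← inv_inj, inv_lsConst, inv_lsConst, sub_sub_cancel, ← neg_div_neg_eq]
  ring_nf

lemma two_mul_halfLogOdds_div_sinh {p : ℝ} (hp : p ∈ Set.Ioo 0 1) :
    2 * halfLogOdds p / Real.sinh (halfLogOdds p) = 2 * (lsConst p)⁻¹ / √(p * (1 - p)) := by
  have hpq : 0 < p * (1 - p) := mul_pos hp.1 (sub_pos.2 hp.2)
  have hs : √(p * (1 - p)) ≠ 0 := (Real.sqrt_pos.2 hpq).ne'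
  have hpq_eq : p * (1 - p) = √(p * (1 - p)) * √(p * (1 - p)) := (Real.mul_self_sqrt hpq.le).symm
  rw [sinh_halfLogOdds hp.1 hp.2, halfLogOdds, inv_lsConst, div_div_eq_mul_div,
    mul_div_cancel₀ _ two_ne_zero]
  nth_rewrite 2 [hpq_eq]
  field_simp

lemma sq_sqrt_div_sub_sqrt_div {p u : ℝ} (hp : p ∈ Set.Ioo 0 1) (hu : u ∈ Set.Icc 0 1) :
    (√(u / p) - √((1 - u) / (1 - p))) ^ 2 =
      2 + (u - p) * (1 - 2 * p) / (p * (1 - p)) - 2 * (√(u * (1 - u)) / √(p * (1 - p))) := by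
  have hp₀ : 0 < p := hp.1
  have hq : 0 < 1 - p := sub_pos.2 hp.2
  have hu₁ : 0 ≤ 1 - u := sub_nonneg.2 hu.2
  rw [sub_sq, Real.sq_sqrt (div_nonneg hu.1 hp₀.le), Real.sq_sqrt (div_nonneg hu₁ hq.le), mul_assoc,
    ← Real.sqrt_mul (div_nonneg hu.1 hp₀.le), div_mul_div_comm,
    Real.sqrt_div (mul_nonneg hu.1 hu₁)]
  field_simp
  ring

lemma twoPointLogSobolev_of_lt_half {p : ℝ} (hp₀ : 0 < p) (hp : p < 1 / 2) :
    TwoPointLogSobolev p (lsConst p)⁻¹ := by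
  have hp₁ : p ∈ Set.Ioo 0 1 := ⟨hp₀, by linarith⟩
  refine .of_density hp₁ fun u hu => ?_
  have hgap := entropyGap_le_of_mem_Icc hp₀ hp hu
  have hs : √(p * (1 - p)) ≠ 0 := (Real.sqrt_pos.2 (mul_pos hp₀ (sub_pos.2 hp₁.2))).ne'
  have hlin : (lsConst p)⁻¹ * ((u - p) * (1 - 2 * p) / (p * (1 - p))) =
      (u - p) * (Real.log (1 - p) - Real.log p) := by
    have hp' : 1 - 2 * p ≠ 0 := by linarith
    have hq : 1 - p ≠ 0 := by linarith
    rw [inv_lsConst, div_mul_div_comm, div_eq_iff (mul_ne_zero hp' (mul_ne_zero hp₀.ne' hq))]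
    ring
  rw [two_mul_halfLogOdds_div_sinh hp₁, entropyGap, entropyGap, div_mul_cancel₀ _ hs] at hgap
  calc twoPointEnt p (u / p) ((1 - u) / (1 - p))
    _ = Real.binEntropy p - Real.binEntropy u + (u - p) * (Real.log (1 - p) - Real.log p) :=
      twoPointEnt_density hp₀.ne' hp₁.2.ne u
    _ ≤ 2 * (lsConst p)⁻¹ - 2 * (lsConst p)⁻¹ / √(p * (1 - p)) * √(u * (1 - u)) +
          (u - p) * (Real.log (1 - p) - Real.log p) := by linarith
    _ = (lsConst p)⁻¹ * (√(u / p) - √((1 - u) / (1 - p))) ^ 2 := by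
      rw [sq_sqrt_div_sub_sqrt_div hp₁ hu, ← hlin]
      ring

theorem twoPointLogSobolev_inv_lsConst {p : ℝ} (hp : p ∈ Set.Ioo 0 1) (hp_half : p ≠ 1 / 2) :
    TwoPointLogSobolev p (lsConst p)⁻¹ := by
  rcases hp_half.lt_or_gt with hlt | hgt
  · exact twoPointLogSobolev_of_lt_half hp.1 hlt
  · rw [← lsConst_one_sub, ← sub_sub_cancel 1 p, sub_sub_cancel 1 (1 - p)]
    exact (twoPointLogSobolev_of_lt_half (sub_pos.2 hp.2) (by linarith)).one_sub

section

variable {n : ℕ} {p : ℝ}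

lemma pWt_nonneg (hp : p ∈ Set.Icc 0 1) (x : Fin n → Bool) : 0 ≤ pWt p x :=
  Finset.prod_nonneg fun k _ => by
    split_ifs
    exacts [hp.1, sub_nonneg.2 hp.2]

lemma pE_comp_apply (p : ℝ) (i : Fin n) (h : Bool → ℝ) :
    pE p (fun x => h (x i)) = p * h true + (1 - p) * h false := by
  have hterm : ∀ x : Fin n → Bool, pWt p x * h (x i) =
      ∏ k, (if x k then p else 1 - p) * (if k = i then h (x k) else 1) := by
    intro x
    simp only [pWt, Finset.prod_mul_distrib, Finset.prod_ite_eq', Finset.mem_univ, if_true]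
  have hfactor : ∀ k ≠ i,
      ∑ b : Bool, (if b then p else 1 - p) * (if k = i then h b else 1) = 1 := by
    intro k hk
    simp [hk]
  simp_rw [pE, hterm]
  rw [← Fintype.prod_sum fun (k : Fin n) (b : Bool) =>
      (if b then p else 1 - p) * (if k = i then h b else 1),
    Fintype.prod_eq_single i hfactor]
  simp

lemma pE_const (p c : ℝ) : pE p (fun _ : Fin n → Bool => c) = c := by
  have hsum : ∑ x : Fin n → Bool, pWt p x = 1 := by
    simp_rw [pWt]
    rw [← Fintype.prod_sum fun (_ : Fin n) (b : Bool) => if b then p else 1 - p]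
    simp
  rw [pE, ← Finset.sum_mul, hsum, one_mul]

lemma pE_add (p : ℝ) (f g : (Fin n → Bool) → ℝ) :
    pE p (fun x => f x + g x) = pE p f + pE p g := by
  simp only [pE, mul_add, Finset.sum_add_distrib]

lemma pE_sub (p : ℝ) (f g : (Fin n → Bool) → ℝ) :
    pE p (fun x => f x - g x) = pE p f - pE p g := by
  simp only [pE, mul_sub, Finset.sum_sub_distrib]

lemma pE_const_mul (p c : ℝ) (f : (Fin n → Bool) → ℝ) :
    pE p (fun x => c * f x) = c * pE p f := by
  simp only [pE, Finset.mul_sum, mul_left_comm]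

lemma pE_mono (hp : p ∈ Set.Icc 0 1) {f g : (Fin n → Bool) → ℝ} (h : ∀ x, f x ≤ g x) :
    pE p f ≤ pE p g :=
  Finset.sum_le_sum fun x _ => mul_le_mul_of_nonneg_left (h x) (pWt_nonneg hp x)

lemma pE_nonneg (hp : p ∈ Set.Icc 0 1) {f : (Fin n → Bool) → ℝ} (h : ∀ x, 0 ≤ f x) :
    0 ≤ pE p f :=
  Finset.sum_nonneg fun x _ => mul_nonneg (pWt_nonneg hp x) (h x)

lemma abs_pE_le (hp : p ∈ Set.Icc 0 1) (f : (Fin n → Bool) → ℝ) :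
    |pE p f| ≤ pE p (fun x => |f x|) := by
  refine (Finset.abs_sum_le_sum_abs _ _).trans_eq (Finset.sum_congr rfl fun x _ => ?_)
  rw [abs_mul, abs_of_nonneg (pWt_nonneg hp x)]

lemma pE_sqrt_mul_sqrt_le (hp : p ∈ Set.Icc 0 1) {F H : (Fin n → Bool) → ℝ} (hF : ∀ x, 0 ≤ F x)
    (hH : ∀ x, 0 ≤ H x) : pE p (fun x => √(F x) * √(H x)) ≤ √(pE p F) * √(pE p H) := by
  refine le_of_eq_of_le (Finset.sum_congr rfl fun x _ => ?_) <|
    Real.sum_sqrt_mul_sqrt_le univ (fun x => mul_nonneg (pWt_nonneg hp x) (hF x))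
      fun x => mul_nonneg (pWt_nonneg hp x) (hH x)
  rw [Real.sqrt_mul (pWt_nonneg hp x), Real.sqrt_mul (pWt_nonneg hp x), mul_mul_mul_comm,
    Real.mul_self_sqrt (pWt_nonneg hp x)]

lemma sq_sqrt_pE_sub_sqrt_pE_le (hp : p ∈ Set.Icc 0 1) {F H : (Fin n → Bool) → ℝ}
    (hF : ∀ x, 0 ≤ F x) (hH : ∀ x, 0 ≤ H x) :
    (√(pE p F) - √(pE p H)) ^ 2 ≤ pE p (fun x => (√(F x) - √(H x)) ^ 2) := by
  have hexpand : ∀ x, (√(F x) - √(H x)) ^ 2 = F x + H x - 2 * (√(F x) * √(H x)) := by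
    intro x
    rw [sub_sq, Real.sq_sqrt (hF x), Real.sq_sqrt (hH x)]
    ring
  simp_rw [hexpand]
  rw [pE_sub, pE_add, pE_const_mul, sub_sq, Real.sq_sqrt (pE_nonneg hp hF),
    Real.sq_sqrt (pE_nonneg hp hH)]
  linarith [pE_sqrt_mul_sqrt_le hp hF hH]

/-! ### Averaging over coordinates -/

/-- The average of `g` over independent resamplings of the coordinates in `S`, that is, the
conditional expectation of `g` given the coordinates outside `S`. -/
noncomputable def avgOn (p : ℝ) (S : Finset (Fin n)) (g : (Fin n → Bool) → ℝ)
    (x : Fin n → Bool) : ℝ :=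
  pE p fun y => g (S.piecewise y x)

lemma avgOn_empty (p : ℝ) (g : (Fin n → Bool) → ℝ) : avgOn p ∅ g = g := by
  funext x
  simp only [avgOn, Finset.piecewise_empty, pE_const]

lemma avgOn_univ (p : ℝ) (g : (Fin n → Bool) → ℝ) : avgOn p univ g = fun _ => pE p g := by
  funext x
  simp only [avgOn, Finset.piecewise_univ]

lemma avgOn_singleton (p : ℝ) (i : Fin n) (g : (Fin n → Bool) → ℝ) (x : Fin n → Bool) :
    avgOn p {i} g x =
      p * g (Function.update x i true) + (1 - p) * g (Function.update x i false) := by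
  simp only [avgOn, Finset.piecewise_singleton]
  exact pE_comp_apply p i fun b => g (Function.update x i b)

lemma avgOn_sub (p : ℝ) (S : Finset (Fin n)) (f g : (Fin n → Bool) → ℝ) :
    avgOn p S (f - g) = avgOn p S f - avgOn p S g :=
  funext fun x => pE_sub p (fun y => f (S.piecewise y x)) fun y => g (S.piecewise y x)

lemma avgOn_nonneg (hp : p ∈ Set.Icc 0 1) (S : Finset (Fin n)) {g : (Fin n → Bool) → ℝ}
    (hg : ∀ x, 0 ≤ g x) (x : Fin n → Bool) : 0 ≤ avgOn p S g x :=
  pE_nonneg hp fun _ => hg _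

lemma avgOn_piecewise (p : ℝ) (S : Finset (Fin n)) (g : (Fin n → Bool) → ℝ)
    (x y : Fin n → Bool) : avgOn p S g (S.piecewise y x) = avgOn p S g x := by
  simp only [avgOn, Finset.piecewise_idem_right]

lemma avgOn_update_of_mem (p : ℝ) {S : Finset (Fin n)} {i : Fin n} (hi : i ∈ S)
    (g : (Fin n → Bool) → ℝ) (x : Fin n → Bool) (b : Bool) :
    avgOn p S g (Function.update x i b) = avgOn p S g x := by
  have hpiece : ∀ y : Fin n → Bool, S.piecewise y (Function.update x i b) = S.piecewise y x :=
    fun y => Finset.piecewise_congr _ (fun _ _ => rfl) fun j hj =>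
      Function.update_of_ne (ne_of_mem_of_not_mem hi hj).symm _ _
  simp only [avgOn, hpiece]

lemma avgOn_update_of_notMem (p : ℝ) {S : Finset (Fin n)} {i : Fin n} (hi : i ∉ S)
    (g : (Fin n → Bool) → ℝ) (x : Fin n → Bool) (b : Bool) :
    avgOn p S g (Function.update x i b) = avgOn p S (fun y => g (Function.update y i b)) x := by
  simp only [avgOn, Finset.update_piecewise_of_notMem S _ _ hi]

lemma pWt_piecewise_mul_pWt_piecewise (p : ℝ) (S : Finset (Fin n)) (x y : Fin n → Bool) :
    pWt p (S.piecewise y x) * pWt p (S.piecewise x y) = pWt p x * pWt p y := by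
  simp only [pWt, ← Finset.prod_mul_distrib]
  refine Finset.prod_congr rfl fun k _ => ?_
  by_cases hk : k ∈ S
  · simp only [Finset.piecewise_eq_of_mem, hk, mul_comm]
  · simp only [Finset.piecewise_eq_of_notMem, hk, not_false_eq_true]

lemma pE_avgOn (p : ℝ) (S : Finset (Fin n)) (g : (Fin n → Bool) → ℝ) :
    pE p (avgOn p S g) = pE p g := by
  -- Exchanging the coordinates in `S` of two independent copies of `x` preserves their joint law.
  have hswap : Function.Involutive fun z : (Fin n → Bool) × (Fin n → Bool) =>
      (S.piecewise z.2 z.1, S.piecewise z.1 z.2) := by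
    intro z
    simp [Finset.piecewise_same]
  calc pE p (avgOn p S g)
    _ = ∑ z : (Fin n → Bool) × (Fin n → Bool),
          pWt p z.1 * pWt p z.2 * g (S.piecewise z.2 z.1) := by
      simp only [pE, avgOn, Finset.mul_sum, Fintype.sum_prod_type, mul_assoc]
    _ = ∑ z : (Fin n → Bool) × (Fin n → Bool), pWt p z.1 * pWt p z.2 * g z.1 := by
      rw [← Equiv.sum_comp hswap.toPerm]
      refine Finset.sum_congr rfl fun z _ => ?_
      simp [pWt_piecewise_mul_pWt_piecewise, Finset.piecewise_same]
    _ = pE p fun x => pE p fun _ : Fin n → Bool => g x := by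
      simp only [pE, Finset.mul_sum, Fintype.sum_prod_type, mul_assoc]
    _ = pE p g := by simp only [pE_const]

lemma avgOn_avgOn (p : ℝ) (S T : Finset (Fin n)) (g : (Fin n → Bool) → ℝ) :
    avgOn p S (avgOn p T g) = avgOn p (S ∪ T) g := by
  funext x
  have hpiece : ∀ y z : Fin n → Bool,
      T.piecewise z (S.piecewise y x) = (S ∪ T).piecewise (T.piecewise z y) x := by
    intro y z
    ext k
    by_cases hT : k ∈ T <;> by_cases hS : k ∈ S <;> simp [hT, hS]
  simp only [avgOn, hpiece]
  exact pE_avgOn p T fun y => g ((S ∪ T).piecewise y x)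

lemma avgOn_mul_avgOn (p : ℝ) (S : Finset (Fin n)) (g h : (Fin n → Bool) → ℝ)
    (x : Fin n → Bool) :
    avgOn p S (fun y => g y * avgOn p S h y) x = avgOn p S g x * avgOn p S h x := by
  change (pE p fun y => g (S.piecewise y x) * avgOn p S h (S.piecewise y x)) = _
  simp only [avgOn_piecewise, mul_comm _ (avgOn p S h x), pE_const_mul]
  rfl

lemma pE_mul_avgOn (p : ℝ) (S : Finset (Fin n)) (g h : (Fin n → Bool) → ℝ) :
    pE p (fun x => g x * avgOn p S h x) = pE p (fun x => avgOn p S g x * avgOn p S h x) := by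
  rw [← pE_avgOn p S, funext (avgOn_mul_avgOn p S g h)]

lemma pE_sq_sub_avgOn (p : ℝ) (S : Finset (Fin n)) (g : (Fin n → Bool) → ℝ) :
    pE p (fun x => (g x - avgOn p S g x) ^ 2) =
      pE p (fun x => g x ^ 2) - pE p (fun x => avgOn p S g x ^ 2) := by
  have hexpand : ∀ x, (g x - avgOn p S g x) ^ 2 =
      g x ^ 2 + avgOn p S g x ^ 2 - 2 * (g x * avgOn p S g x) := fun x => by ring
  simp_rw [hexpand]
  rw [pE_sub, pE_add, pE_const_mul, pE_mul_avgOn]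
  simp_rw [← sq]
  ring

lemma pE_abs_avgOn_le (hp : p ∈ Set.Icc 0 1) (S : Finset (Fin n)) (g : (Fin n → Bool) → ℝ) :
    pE p (fun x => |avgOn p S g x|) ≤ pE p (fun x => |g x|) :=
  (pE_mono hp fun _ => abs_pE_le hp _).trans_eq (pE_avgOn p S fun x => |g x|)

/-- The discrete derivative `x ↦ g(x^{i→1}) - g(x^{i→0})`. -/
def discreteDeriv (i : Fin n) (g : (Fin n → Bool) → ℝ) (x : Fin n → Bool) : ℝ :=
  g (Function.update x i true) - g (Function.update x i false)

/-- The coordinate Laplacian `g - E_i g`, where `E_i` averages over the `i`-th coordinate. -/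
noncomputable def coordLaplacian (p : ℝ) (i : Fin n) (g : (Fin n → Bool) → ℝ) :
    (Fin n → Bool) → ℝ :=
  g - avgOn p {i} g

lemma avgOn_coordLaplacian (p : ℝ) (S : Finset (Fin n)) (i : Fin n) (g : (Fin n → Bool) → ℝ) :
    avgOn p S (coordLaplacian p i g) = coordLaplacian p i (avgOn p S g) := by
  simp only [coordLaplacian, avgOn_sub, avgOn_avgOn, Finset.union_comm]

lemma pE_comp_coordLaplacian (p : ℝ) (i : Fin n) (g : (Fin n → Bool) → ℝ) (φ : ℝ → ℝ) :
    pE p (fun x => φ (coordLaplacian p i g x)) =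
      pE p (fun x => p * φ ((1 - p) * discreteDeriv i g x) +
        (1 - p) * φ (-p * discreteDeriv i g x)) := by
  have htrue : ∀ x, coordLaplacian p i g (Function.update x i true) =
      (1 - p) * discreteDeriv i g x := by
    intro x
    simp only [coordLaplacian, Pi.sub_apply, avgOn_singleton, Function.update_idem, discreteDeriv]
    ring
  have hfalse : ∀ x, coordLaplacian p i g (Function.update x i false) =
      -p * discreteDeriv i g x := by
    intro x
    simp only [coordLaplacian, Pi.sub_apply, avgOn_singleton, Function.update_idem, discreteDeriv]
    ring
  rw [← pE_avgOn p {i}]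
  congr 1
  funext x
  rw [avgOn_singleton, htrue, hfalse]

lemma pE_abs_coordLaplacian (hp : p ∈ Set.Icc 0 1) (i : Fin n) (g : (Fin n → Bool) → ℝ) :
    pE p (fun x => |coordLaplacian p i g x|) =
      2 * p * (1 - p) * pE p (fun x => |discreteDeriv i g x|) := by
  rw [pE_comp_coordLaplacian p i g abs, ← pE_const_mul]
  congr 1
  funext x
  rw [abs_mul, abs_mul, abs_neg, abs_of_nonneg hp.1, abs_of_nonneg (sub_nonneg.2 hp.2)]
  ring

lemma pE_sq_coordLaplacian (p : ℝ) (i : Fin n) (g : (Fin n → Bool) → ℝ) :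
    pE p (fun x => coordLaplacian p i g x ^ 2) =
      p * (1 - p) * pE p (fun x => discreteDeriv i g x ^ 2) := by
  rw [pE_comp_coordLaplacian p i g (· ^ 2), ← pE_const_mul]
  congr 1
  funext x
  ring

/-! ### Martingale differences -/

lemma sum_Iio_sub_Iic {M : Type*} [AddCommGroup M] (F : Finset (Fin n) → M) :
    ∑ i, (F (Iio i) - F (Iic i)) = F ∅ - F univ := by
  let initial (k : ℕ) : Finset (Fin n) := {j | (j : ℕ) < k}
  have hIio : ∀ i : Fin n, Iio i = initial i := fun i => by ext; simp [initial]
  have hIic : ∀ i : Fin n, Iic i = initial (i + 1) := fun i => by ext; simp [initial]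
  have h₀ : initial 0 = ∅ := by simp [initial]
  have hₙ : initial n = univ := by simp [initial]
  simp_rw [hIio, hIic]
  rw [Fin.sum_univ_eq_sum_range fun k => F (initial k) - F (initial (k + 1)),
    Finset.sum_range_sub', h₀, hₙ]

/-- The `i`-th difference `E[g | x_i, x_{i+1}, …] - E[g | x_{i+1}, …]` of the martingale that
averages out the coordinates of `g` in increasing order. -/
noncomputable def martingaleDiff (p : ℝ) (i : Fin n) (g : (Fin n → Bool) → ℝ) :
    (Fin n → Bool) → ℝ :=
  avgOn p (Iio i) g - avgOn p (Iic i) g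

lemma avgOn_Iic (p : ℝ) (i : Fin n) (g : (Fin n → Bool) → ℝ) :
    avgOn p (Iic i) g = avgOn p {i} (avgOn p (Iio i) g) := by
  rw [avgOn_avgOn, ← Finset.insert_eq, Finset.Iio_insert]

lemma martingaleDiff_eq_coordLaplacian (p : ℝ) (i : Fin n) (g : (Fin n → Bool) → ℝ) :
    martingaleDiff p i g = coordLaplacian p i (avgOn p (Iio i) g) := by
  rw [martingaleDiff, avgOn_Iic, coordLaplacian]

lemma coordLaplacian_martingaleDiff (p : ℝ) (i k : Fin n) (g : (Fin n → Bool) → ℝ) :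
    coordLaplacian p i (martingaleDiff p k g) = martingaleDiff p k (coordLaplacian p i g) := by
  simp only [martingaleDiff, avgOn_coordLaplacian]
  simp only [coordLaplacian, avgOn_sub]
  abel

lemma pE_abs_martingaleDiff_le (hp : p ∈ Set.Icc 0 1) (i : Fin n) (g : (Fin n → Bool) → ℝ) :
    pE p (fun x => |martingaleDiff p i g x|) ≤
      2 * p * (1 - p) * pE p (fun x => |discreteDeriv i g x|) := by
  rw [martingaleDiff_eq_coordLaplacian, ← avgOn_coordLaplacian, ← pE_abs_coordLaplacian hp]
  exact pE_abs_avgOn_le hp _ _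

/-- The variance of `g` under `μ_p`. -/
noncomputable def pVar (p : ℝ) (g : (Fin n → Bool) → ℝ) : ℝ :=
  pE p (fun x => g x ^ 2) - pE p g ^ 2

lemma sum_pE_sq_martingaleDiff (p : ℝ) (g : (Fin n → Bool) → ℝ) :
    ∑ i, pE p (fun x => martingaleDiff p i g x ^ 2) = pVar p g := by
  have horth : ∀ i, pE p (fun x => martingaleDiff p i g x ^ 2) =
      pE p (fun x => avgOn p (Iio i) g x ^ 2) - pE p (fun x => avgOn p (Iic i) g x ^ 2) := by
    intro i
    rw [avgOn_Iic, ← pE_sq_sub_avgOn, martingaleDiff_eq_coordLaplacian]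
    rfl
  simp_rw [horth]
  rw [sum_Iio_sub_Iic fun S => pE p fun x => avgOn p S g x ^ 2, avgOn_empty, avgOn_univ, pE_const,
    pVar]

lemma sum_pE_sq_discreteDeriv_martingaleDiff_le (hp : p ∈ Set.Ioo 0 1) (i : Fin n)
    (g : (Fin n → Bool) → ℝ) :
    ∑ k, pE p (fun x => discreteDeriv i (martingaleDiff p k g) x ^ 2) ≤
      pE p (fun x => discreteDeriv i g x ^ 2) := by
  refine le_of_mul_le_mul_left ?_ (mul_pos hp.1 (sub_pos.2 hp.2))
  calc p * (1 - p) * ∑ k, pE p (fun x => discreteDeriv i (martingaleDiff p k g) x ^ 2)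
    _ = ∑ k, pE p (fun x => martingaleDiff p k (coordLaplacian p i g) x ^ 2) := by
      simp only [Finset.mul_sum, ← pE_sq_coordLaplacian, coordLaplacian_martingaleDiff]
    _ = pVar p (coordLaplacian p i g) := sum_pE_sq_martingaleDiff p _
    _ ≤ pE p (fun x => coordLaplacian p i g x ^ 2) := sub_le_self _ (sq_nonneg _)
    _ = p * (1 - p) * pE p (fun x => discreteDeriv i g x ^ 2) := pE_sq_coordLaplacian p i g

/-! ### Entropy under the product measure -/

/-- The entropy `E[G log G] - E[G] log E[G]` of `G` under `μ_p`. -/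
noncomputable def pEnt (p : ℝ) (G : (Fin n → Bool) → ℝ) : ℝ :=
  pE p (fun x => G x * Real.log (G x)) - pE p G * Real.log (pE p G)

lemma pE_sq_discreteDeriv_sqrt_avgOn_le (hp : p ∈ Set.Icc 0 1) (i : Fin n) (S : Finset (Fin n))
    {G : (Fin n → Bool) → ℝ} (hG : ∀ x, 0 ≤ G x) :
    pE p (fun x => discreteDeriv i (fun y => √(avgOn p S G y)) x ^ 2) ≤
      pE p (fun x => discreteDeriv i (fun y => √(G y)) x ^ 2) := by
  rw [← pE_avgOn p S fun x => discreteDeriv i (fun y => √(G y)) x ^ 2]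
  refine pE_mono hp fun x => ?_
  by_cases hi : i ∈ S
  · simp only [discreteDeriv, avgOn_update_of_mem p hi, sub_self, zero_pow two_ne_zero]
    exact avgOn_nonneg hp S (fun _ => sq_nonneg _) x
  · simp only [discreteDeriv, avgOn_update_of_notMem p hi]
    exact sq_sqrt_pE_sub_sqrt_pE_le hp (fun _ => hG _) fun _ => hG _

lemma pE_mul_log_sub_avgOn_singleton_le {K : ℝ} (hK : TwoPointLogSobolev p K)
    (hp : p ∈ Set.Icc 0 1) (i : Fin n) {G : (Fin n → Bool) → ℝ} (hG : ∀ x, 0 ≤ G x) :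
    pE p (fun x => G x * Real.log (G x)) -
        pE p (fun x => avgOn p {i} G x * Real.log (avgOn p {i} G x)) ≤
      K * pE p (fun x => discreteDeriv i (fun y => √(G y)) x ^ 2) := by
  rw [← pE_avgOn p {i} fun x => G x * Real.log (G x), ← pE_sub, ← pE_const_mul]
  refine pE_mono hp fun x => ?_
  simp only [avgOn_singleton]
  exact hK (hG _) (hG _)

theorem pEnt_le_sum {K : ℝ} (hK : TwoPointLogSobolev p K) (hp : p ∈ Set.Icc 0 1)
    {G : (Fin n → Bool) → ℝ} (hG : ∀ x, 0 ≤ G x) :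
    pEnt p G ≤ K * ∑ i, pE p (fun x => discreteDeriv i (fun y => √(G y)) x ^ 2) := by
  let φ (S : Finset (Fin n)) : ℝ := pE p fun x => avgOn p S G x * Real.log (avgOn p S G x)
  have htelescope : pEnt p G = ∑ i, (φ (Iio i) - φ (Iic i)) := by
    rw [sum_Iio_sub_Iic]
    simp only [φ, avgOn_empty, avgOn_univ, pE_const, pEnt]
  rw [htelescope, Finset.mul_sum]
  refine Finset.sum_le_sum fun i _ => ?_
  calc φ (Iio i) - φ (Iic i)
    _ ≤ K * pE p (fun x => discreteDeriv i (fun y => √(avgOn p (Iio i) G y)) x ^ 2) := by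
      simp only [φ, avgOn_Iic]
      exact pE_mul_log_sub_avgOn_singleton_le hK hp i (avgOn_nonneg hp _ hG)
    _ ≤ K * pE p (fun x => discreteDeriv i (fun y => √(G y)) x ^ 2) :=
      mul_le_mul_of_nonneg_left (pE_sq_discreteDeriv_sqrt_avgOn_le hp i _ hG) (hK.nonneg hp)

theorem pEnt_sq_le {K : ℝ} (hK : TwoPointLogSobolev p K) (hp : p ∈ Set.Icc 0 1)
    (g : (Fin n → Bool) → ℝ) :
    pEnt p (fun x => g x ^ 2) ≤ K * ∑ i, pE p (fun x => discreteDeriv i g x ^ 2) := by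
  refine (pEnt_le_sum hK hp fun x => sq_nonneg (g x)).trans ?_
  refine mul_le_mul_of_nonneg_left (Finset.sum_le_sum fun i _ => ?_) (hK.nonneg hp)
  refine pE_mono hp fun x => ?_
  simp only [discreteDeriv, Real.sqrt_sq_eq_abs]
  exact sq_le_sq.2 (abs_abs_sub_abs_le _ _)

lemma two_mul_le_sq_mul_log_sq {s : ℝ} (hs : 0 < s) (t : ℝ) :
    2 * (t ^ 2 * Real.log s + t ^ 2 - s * |t|) ≤ t ^ 2 * Real.log (t ^ 2) := by
  rcases eq_or_ne t 0 with rfl | ht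
  · simp
  have ht' : 0 < |t| := abs_pos.2 ht
  have hlog : Real.log s - Real.log t ≤ s / |t| - 1 := by
    rw [← Real.log_abs t, ← Real.log_div hs.ne' ht'.ne']
    exact Real.log_le_sub_one_of_pos (div_pos hs ht')
  have hmul := mul_le_mul_of_nonneg_left hlog (sq_nonneg t)
  have hcancel : t ^ 2 * (s / |t|) = s * |t| := by
    rw [← sq_abs]
    field_simp
  rw [mul_sub, mul_sub, hcancel] at hmul
  rw [Real.log_pow]
  push_cast
  linarith

lemma two_mul_le_pE_sq_mul_log_sq (hp : p ∈ Set.Icc 0 1) {s : ℝ} (hs : 0 < s)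
    (g : (Fin n → Bool) → ℝ) :
    2 * (Real.log s * pE p (fun x => g x ^ 2) + pE p (fun x => g x ^ 2) -
        s * pE p (fun x => |g x|)) ≤
      pE p (fun x => g x ^ 2 * Real.log (g x ^ 2)) := by
  rw [← pE_const_mul, ← pE_const_mul, ← pE_add, ← pE_sub, ← pE_const_mul]
  exact pE_mono hp fun x => by linarith [two_mul_le_sq_mul_log_sq hs (g x)]

lemma le_pEnt_sq (hp : p ∈ Set.Icc 0 1) {s : ℝ} (hs : 0 < s) (g : (Fin n → Bool) → ℝ) :
    pE p (fun x => g x ^ 2) * Real.log s + pE p (fun x => g x ^ 2) -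
        s * pE p (fun x => |g x|) ^ 2 ≤
      pEnt p (fun x => g x ^ 2) := by
  rw [pEnt]
  have hM₀ : 0 ≤ pE p (fun x => g x ^ 2) := pE_nonneg hp fun x => sq_nonneg _
  set M := pE p (fun x => g x ^ 2) with hM
  set e := pE p (fun x => |g x|)
  rcases hM₀.eq_or_lt with hM₀ | hM₀
  · have hzero : ∀ x, pWt p x * g x ^ 2 = 0 := by
      have := (Finset.sum_eq_zero_iff_of_nonneg fun x _ =>
        mul_nonneg (pWt_nonneg hp x) (sq_nonneg (g x))).1 (hM.symm.trans hM₀.symm)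
      simpa using this
    have hmul_log : pE p (fun x => g x ^ 2 * Real.log (g x ^ 2)) = 0 :=
      Finset.sum_eq_zero fun x _ => by rw [← mul_assoc, hzero, zero_mul]
    rw [hmul_log, ← hM₀]
    linarith [mul_nonneg hs.le (sq_nonneg e)]
  · -- The pointwise bound with `√(s M)` for `s` gives the claim, as `2 √(s M) e ≤ s e² + M`.
    have hr := two_mul_le_pE_sq_mul_log_sq hp (Real.sqrt_pos.2 (mul_pos hs hM₀)) g
    rw [Real.log_sqrt (mul_pos hs hM₀).le, Real.log_mul hs.ne' hM₀.ne', Real.sqrt_mul hs.le] at hr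
    have hsq : (√s * e - √M) ^ 2 = s * e ^ 2 + M - 2 * (√s * √M * e) := by
      rw [sub_sq, mul_pow, Real.sq_sqrt hs.le, Real.sq_sqrt hM₀.le]
      ring
    linarith [sq_nonneg (√s * e - √M)]

lemma pVar_mul_log_add_pVar_sub_le {K : ℝ} (hK : TwoPointLogSobolev p K) (hp : p ∈ Set.Ioo 0 1)
    {s : ℝ} (hs : 0 < s) (g : (Fin n → Bool) → ℝ) :
    pVar p g * Real.log s + pVar p g -
        s * ∑ i, (2 * p * (1 - p) * pE p (fun x => |discreteDeriv i g x|)) ^ 2 ≤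
      K * ∑ i, pE p (fun x => discreteDeriv i g x ^ 2) := by
  have hp' := Set.Ioo_subset_Icc_self hp
  calc
    _ = ∑ k, (pE p (fun x => martingaleDiff p k g x ^ 2) * Real.log s +
          pE p (fun x => martingaleDiff p k g x ^ 2) -
          s * (2 * p * (1 - p) * pE p (fun x => |discreteDeriv k g x|)) ^ 2) := by
      rw [Finset.sum_sub_distrib, Finset.sum_add_distrib, ← Finset.sum_mul, ← Finset.mul_sum,
        sum_pE_sq_martingaleDiff]
    _ ≤ ∑ k, pEnt p (fun x => martingaleDiff p k g x ^ 2) := by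
      refine Finset.sum_le_sum fun k _ => le_trans ?_ (le_pEnt_sq hp' hs _)
      have := pE_nonneg hp' fun x => abs_nonneg (martingaleDiff p k g x)
      gcongr
      exact pE_abs_martingaleDiff_le hp' k g
    _ ≤ ∑ k, K * ∑ i, pE p (fun x => discreteDeriv i (martingaleDiff p k g) x ^ 2) :=
      Finset.sum_le_sum fun k _ => pEnt_sq_le hK hp' _
    _ = K * ∑ i, ∑ k, pE p (fun x => discreteDeriv i (martingaleDiff p k g) x ^ 2) := by
      rw [← Finset.mul_sum, Finset.sum_comm]
    _ ≤ K * ∑ i, pE p (fun x => discreteDeriv i g x ^ 2) :=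
      mul_le_mul_of_nonneg_left
        (Finset.sum_le_sum fun i _ => sum_pE_sq_discreteDeriv_martingaleDiff_le hp i g)
        (hK.nonneg hp')

theorem TwoPointLogSobolev.sum_sq_pE_abs_discreteDeriv_ge {K : ℝ} (hK : TwoPointLogSobolev p K)
    (hp : p ∈ Set.Ioo 0 1) {g : (Fin n → Bool) → ℝ} (hg : 0 < pVar p g) :
    ∑ i, pE p (fun x => |discreteDeriv i g x|) ^ 2 ≥
      pVar p g / (4 * p ^ 2 * (1 - p) ^ 2) *
        Real.exp (-(K * ∑ i, pE p (fun x => discreteDeriv i g x ^ 2)) / pVar p g) := by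
  have hp₀ : 0 < p := hp.1
  have hq : 0 < 1 - p := sub_pos.2 hp.2
  -- This value of `s` makes `Var(g) log s` cancel the right-hand side of the bound.
  have hmain := pVar_mul_log_add_pVar_sub_le hK hp
    (Real.exp_pos (K * (∑ i, pE p (fun x => discreteDeriv i g x ^ 2)) / pVar p g)) g
  rw [Real.log_exp, mul_div_cancel₀ _ hg.ne'] at hmain
  simp_rw [mul_pow, ← Finset.mul_sum] at hmain
  rw [neg_div, Real.exp_neg, ge_iff_le, ← div_eq_mul_inv, div_div, div_le_iff₀ (by positivity)]
  linarith

theorem biased_sum_sq_influences_general (hp : p ∈ Set.Ioo 0 1) (hp_half : p ≠ 1 / 2)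
    {g : (Fin n → Bool) → ℝ} (hg : 0 < pVar p g) :
    ∑ i, pE p (fun x => |discreteDeriv i g x|) ^ 2 ≥
      pVar p g / (4 * p ^ 2 * (1 - p) ^ 2) *
        Real.exp (-(∑ i, pE p (fun x => discreteDeriv i g x ^ 2)) / (lsConst p * pVar p g)) := by
  convert (twoPointLogSobolev_inv_lsConst hp hp_half).sum_sq_pE_abs_discreteDeriv_ge hp hg using 3
  rw [← div_div, ← mul_neg, ← div_eq_inv_mul]

lemma ne_flipAt_iff (f : (Fin n → Bool) → Bool) (i : Fin n) (x : Fin n → Bool) :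
    f x ≠ f (flipAt x i) ↔ f (Function.update x i true) ≠ f (Function.update x i false) := by
  have hx := Function.update_eq_self i x
  cases h : x i <;> rw [h] at hx <;> simp [flipAt, h, hx, eq_comm]

lemma abs_discreteDeriv_ite (f : (Fin n → Bool) → Bool) (i : Fin n) (x : Fin n → Bool) :
    |discreteDeriv i (fun y => if f y then 1 else 0) x| =
      if f x ≠ f (flipAt x i) then 1 else 0 := by
  simp only [ne_flipAt_iff, discreteDeriv]
  cases f (Function.update x i true) <;> cases f (Function.update x i false) <;> simp

lemma pE_abs_discreteDeriv_ite (p : ℝ) (f : (Fin n → Bool) → Bool) (i : Fin n) :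
    pE p (fun x => |discreteDeriv i (fun y => if f y then 1 else 0) x|) = pInfl p f i := by
  simp only [abs_discreteDeriv_ite, pInfl]

lemma pE_sq_discreteDeriv_ite (p : ℝ) (f : (Fin n → Bool) → Bool) (i : Fin n) :
    pE p (fun x => discreteDeriv i (fun y => if f y then 1 else 0) x ^ 2) = pInfl p f i := by
  simp only [← sq_abs (discreteDeriv i _ _), abs_discreteDeriv_ite, pInfl, ite_pow, one_pow,
    zero_pow two_ne_zero]

end

/-- Biased-measure form of the main theorem for Boolean functions: for `0 < p < 1/2`
and a non-constant Boolean `f` with variance `σ² > 0` under `μ_p`,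
`Σ_i I_i² ≥ (σ²/(4p²(1-p)²)) · exp(-(Σ_i I_i)/(C(p)σ²))`. -/
theorem biased_sum_sq_influences {n : ℕ} (p : ℝ) (hp0 : 0 < p) (hp : p < 1 / 2)
    (f : (Fin n → Bool) → Bool) (hnc : ∃ x y, f x ≠ f y)
    (hσ : 0 < pE p (fun x => (if f x then (1 : ℝ) else 0) ^ 2) -
        (pE p (fun x => if f x then (1 : ℝ) else 0)) ^ 2) :
    ∑ i : Fin n, (pInfl p f i) ^ 2 ≥
      (pE p (fun x => (if f x then (1 : ℝ) else 0) ^ 2) -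
          (pE p (fun x => if f x then (1 : ℝ) else 0)) ^ 2) / (4 * p ^ 2 * (1 - p) ^ 2) *
        Real.exp (-(∑ i : Fin n, pInfl p f i) /
          (lsConst p * (pE p (fun x => (if f x then (1 : ℝ) else 0) ^ 2) -
            (pE p (fun x => if f x then (1 : ℝ) else 0)) ^ 2))) := by
  simpa only [pE_abs_discreteDeriv_ite, pE_sq_discreteDeriv_ite, pVar] using
    biased_sum_sq_influences_general ⟨hp0, by linarith⟩ hp.ne hσ
end

section
/- Let μ_0, μ_1, v_0, v_1 be positive reals satisfying μ_0 + μ_1 = 2, v_0 ≥ μ_0², v_1 ≥ μ_1², and set v = (v_0 + v_1)/2. Then v_0·log(v_0/μ_0²) + v_1·log(v_1/μ_1²) + [ v_0 + v_1 − 2·√(v_0 − μ_0²)·√(v_1 − μ_1²) − 2 μ_0 μ_1 ] ≥ 2 v log v. -/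
/-!
With `v` and `μ` the means of `v₀, v₁` and of `μ₀, μ₁`, the inequality is the case `μ = 1` of the
homogeneous one `∑ vᵢ log (vᵢ / μᵢ²) + [...] ≥ 2 v log (v / μ²)`. Since
`log (x / y²) = 2 log (x / y) - log x`, the log-sum inequality
`∑ vᵢ log (vᵢ / μᵢ) ≥ 2 v log (v / μ)` removes the `μᵢ` from the logarithms, and Cauchy–Schwarz
removes them from the bracket, bounding it below by `(√v₀ - √v₁)²`. What is left,
`∑ vᵢ log (vᵢ / v) ≤ (√v₀ - √v₁)²`, is Gross's two-point logarithmic Sobolev inequality. In the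
variable `y = log √(v₁ / v₀)` this compares `y tanh y` with `1 - 1 / cosh y + log (cosh y)`, and
the difference has derivative `(sinh y - y) / cosh² y`.
-/

open Real

lemma log_div_sq {x y : ℝ} (hx : x ≠ 0) (hy : y ≠ 0) :
    log (x / y ^ 2) = 2 * log (x / y) - log x := by
  rw [log_div hx (pow_ne_zero 2 hy), log_div hx hy, log_pow]
  push_cast
  ring

lemma sum_mul_log_div_sum_le {ι : Type*} (s : Finset ι) {v w : ι → ℝ}
    (hv : ∀ i ∈ s, 0 ≤ v i) (hw : ∀ i ∈ s, 0 < w i) :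
    (∑ i ∈ s, v i) * log ((∑ i ∈ s, v i) / ∑ i ∈ s, w i) ≤
      ∑ i ∈ s, v i * log (v i / w i) := by
  obtain rfl | hs := s.eq_empty_or_nonempty
  · simp
  have hW : 0 < ∑ i ∈ s, w i := Finset.sum_pos hw hs
  have cancel : ∀ i ∈ s, w i * (v i / w i) = v i := fun i hi ↦ mul_div_cancel₀ _ (hw i hi).ne'
  have jensen := convexOn_mul_log.map_centerMass_le (t := s) (w := w) (p := fun i ↦ v i / w i)
    (fun i hi ↦ (hw i hi).le) hW (fun i hi ↦ div_nonneg (hv i hi) (hw i hi).le)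
  have mean : s.centerMass w (fun i ↦ v i / w i) = (∑ i ∈ s, v i) / ∑ i ∈ s, w i := by
    rw [Finset.centerMass, smul_eq_mul, inv_mul_eq_div]
    exact congrArg (· / _) (Finset.sum_congr rfl cancel)
  have mean_mul_log : s.centerMass w ((fun x ↦ x * log x) ∘ fun i ↦ v i / w i) =
      (∑ i ∈ s, v i * log (v i / w i)) / ∑ i ∈ s, w i := by
    rw [Finset.centerMass, smul_eq_mul, inv_mul_eq_div]
    refine congrArg (· / _) (Finset.sum_congr rfl fun i hi ↦ ?_)
    rw [Function.comp_apply, smul_eq_mul, ← mul_assoc, cancel i hi]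
  rwa [mean, mean_mul_log, div_mul_eq_mul_div, div_le_div_iff_of_pos_right hW] at jensen

lemma mul_log_div_add_le {v₀ v₁ w₀ w₁ : ℝ} (hv₀ : 0 ≤ v₀) (hv₁ : 0 ≤ v₁)
    (hw₀ : 0 < w₀) (hw₁ : 0 < w₁) :
    (v₀ + v₁) * log ((v₀ + v₁) / (w₀ + w₁)) ≤ v₀ * log (v₀ / w₀) + v₁ * log (v₁ / w₁) := by
  simpa using sum_mul_log_div_sum_le Finset.univ (v := ![v₀, v₁]) (w := ![w₀, w₁])
    (by simp [Fin.forall_fin_two, hv₀, hv₁]) (by simp [Fin.forall_fin_two, hw₀, hw₁])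

lemma sqrt_sub_sq_mul_sqrt_sub_sq_add_mul_le {x y a b : ℝ} (ha : a ^ 2 ≤ x) (hb : b ^ 2 ≤ y) :
    √(x - a ^ 2) * √(y - b ^ 2) + a * b ≤ √x * √y := by
  have h := sum_mul_le_sqrt_mul_sqrt Finset.univ ![√(x - a ^ 2), a] ![√(y - b ^ 2), b]
  simp only [Fin.sum_univ_two, Matrix.cons_val_zero, Matrix.cons_val_one] at h
  rwa [sq_sqrt (sub_nonneg.2 ha), sq_sqrt (sub_nonneg.2 hb), sub_add_cancel, sub_add_cancel] at h

lemma hasDerivAt_log_cosh_sub_inv_cosh_sub_mul_tanh (y : ℝ) :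
    HasDerivAt (fun y ↦ log (cosh y) - (cosh y)⁻¹ - y * tanh y)
      ((sinh y - y) / cosh y ^ 2) y := by
  have hcosh : cosh y ≠ 0 := (cosh_pos y).ne'
  have htanh : HasDerivAt tanh ((cosh y * cosh y - sinh y * sinh y) / cosh y ^ 2) y := by
    simpa only [funext tanh_eq_sinh_div_cosh] using!
      (hasDerivAt_sinh y).div (hasDerivAt_cosh y) hcosh
  convert! (((hasDerivAt_cosh y).log hcosh).sub ((hasDerivAt_cosh y).inv hcosh)).sub
    ((hasDerivAt_id y).mul htanh) using 1
  rw [tanh_eq_sinh_div_cosh, id]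
  field_simp
  linear_combination y * cosh_sq y

lemma mul_tanh_le_one_sub_inv_cosh_add_log_cosh (y : ℝ) :
    y * tanh y ≤ 1 - (cosh y)⁻¹ + log (cosh y) := by
  wlog hy : 0 ≤ y generalizing y
  · simpa using this (-y) (by linarith)
  have hderiv := hasDerivAt_log_cosh_sub_inv_cosh_sub_mul_tanh
  have hmono : MonotoneOn (fun y ↦ log (cosh y) - (cosh y)⁻¹ - y * tanh y) (Set.Ici 0) := by
    refine monotoneOn_of_hasDerivWithinAt_nonneg (convex_Ici 0)
      (fun x _ ↦ (hderiv x).continuousAt.continuousWithinAt)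
      (fun x _ ↦ (hderiv x).hasDerivWithinAt) fun x hx ↦ ?_
    exact div_nonneg (sub_nonneg.2 (self_le_sinh_iff.2 (interior_subset hx))) (sq_nonneg _)
  have h0 := hmono Set.self_mem_Ici hy hy
  simp only [cosh_zero, log_one, inv_one, tanh_zero, mul_zero] at h0
  linarith

lemma two_point_log_sobolev {a b : ℝ} (ha : 0 < a) (hb : 0 < b) :
    a ^ 2 * log (a ^ 2) + b ^ 2 * log (b ^ 2) ≤
      (a ^ 2 + b ^ 2) * log ((a ^ 2 + b ^ 2) / 2) + (a - b) ^ 2 := by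
  have hcosh : cosh (log (b / a)) = (a ^ 2 + b ^ 2) / 2 / (a * b) := by
    rw [cosh_log (div_pos hb ha)]
    field_simp
    ring
  have htanh : tanh (log (b / a)) = (b ^ 2 - a ^ 2) / (a ^ 2 + b ^ 2) := by
    rw [tanh_eq_sinh_div_cosh, hcosh, sinh_log (div_pos hb ha)]
    field_simp
  have hlog_cosh : log (cosh (log (b / a))) = log ((a ^ 2 + b ^ 2) / 2) - (log a + log b) := by
    rw [hcosh, log_div (by positivity) (by positivity), log_mul ha.ne' hb.ne']
  have key := mul_tanh_le_one_sub_inv_cosh_add_log_cosh (log (b / a))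
  rw [hlog_cosh, hcosh, htanh, log_div hb.ne' ha.ne'] at key
  have hscaled := mul_le_mul_of_nonneg_left key (by positivity : 0 ≤ a ^ 2 + b ^ 2)
  rw [log_pow, log_pow]
  field_simp at hscaled
  push_cast
  linarith

theorem inductive_step_inequality_general {μ₀ μ₁ v₀ v₁ : ℝ}
    (hμ₀ : 0 < μ₀) (hμ₁ : 0 < μ₁) (h₀ : μ₀ ^ 2 ≤ v₀) (h₁ : μ₁ ^ 2 ≤ v₁) :
    v₀ * log (v₀ / μ₀ ^ 2) + v₁ * log (v₁ / μ₁ ^ 2) +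
        (v₀ + v₁ - 2 * √(v₀ - μ₀ ^ 2) * √(v₁ - μ₁ ^ 2) - 2 * μ₀ * μ₁) ≥
      2 * ((v₀ + v₁) / 2) * log ((v₀ + v₁) / 2 / ((μ₀ + μ₁) / 2) ^ 2) := by
  have hv₀ : 0 < v₀ := (pow_pos hμ₀ 2).trans_le h₀
  have hv₁ : 0 < v₁ := (pow_pos hμ₁ 2).trans_le h₁
  have log_sum := mul_log_div_add_le hv₀.le hv₁.le hμ₀ hμ₁
  have cauchy_schwarz := sqrt_sub_sq_mul_sqrt_sub_sq_add_mul_le h₀ h₁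
  have log_sobolev := two_point_log_sobolev (sqrt_pos.2 hv₀) (sqrt_pos.2 hv₁)
  rw [sub_sq, sq_sqrt hv₀.le, sq_sqrt hv₁.le] at log_sobolev
  rw [log_div_sq hv₀.ne' hμ₀.ne', log_div_sq hv₁.ne' hμ₁.ne',
    log_div_sq (by positivity) (by positivity), div_div_div_cancel_right₀ two_ne_zero]
  linarith

/-- The key inequality in the inductive proof of the functional isoperimetric inequality:
for positive `μ₀, μ₁, v₀, v₁` with `μ₀ + μ₁ = 2`, `v₀ ≥ μ₀²`, `v₁ ≥ μ₁²` and
`v = (v₀ + v₁)/2`,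
`v₀ log(v₀/μ₀²) + v₁ log(v₁/μ₁²) + [v₀ + v₁ - 2√(v₀-μ₀²)√(v₁-μ₁²) - 2μ₀μ₁] ≥ 2v log v`. -/
theorem inductive_step_inequality (μ₀ μ₁ v₀ v₁ : ℝ)
    (hμ₀ : 0 < μ₀) (hμ₁ : 0 < μ₁) (hv₀ : 0 < v₀) (hv₁ : 0 < v₁)
    (hsum : μ₀ + μ₁ = 2) (h₀ : μ₀ ^ 2 ≤ v₀) (h₁ : μ₁ ^ 2 ≤ v₁) :
    v₀ * Real.log (v₀ / μ₀ ^ 2) + v₁ * Real.log (v₁ / μ₁ ^ 2) +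
        (v₀ + v₁ - 2 * Real.sqrt (v₀ - μ₀ ^ 2) * Real.sqrt (v₁ - μ₁ ^ 2) - 2 * μ₀ * μ₁) ≥
      2 * ((v₀ + v₁) / 2) * Real.log ((v₀ + v₁) / 2) := by
  simpa [hsum] using inductive_step_inequality_general hμ₀ hμ₁ h₀ h₁
end

section
/- For every y ∈ [−1, 1], one has 1 − √(1 − y²) ≥ log 2 − H((1−y)/2), where H(x) = −x log x − (1−x) log(1−x) is the natural entropy function (with the convention 0 · log 0 = 0). -/
/-- The natural entropy function `H(x) = -x log x - (1-x) log(1-x)`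
(the convention `0 · log 0 = 0` holds since `Real.log 0 = 0`). -/
noncomputable def entH (x : ℝ) : ℝ := -x * Real.log x - (1 - x) * Real.log (1 - x)

/-!
The difference of the two sides is even in `y` and vanishes at `y = 0`. On `[0, 1)` its derivative
is `y / √(1 - y²) - artanh y`, which is `sinh t - t ≥ 0` for `y = tanh t`.
-/

open Real Set

theorem entH_eq_binEntropy : entH = binEntropy := by
  ext x
  rw [entH, binEntropy, log_inv, log_inv]
  ring

theorem binEntropy_one_sub_abs_div_two (y : ℝ) :
    binEntropy ((1 - |y|) / 2) = binEntropy ((1 - y) / 2) := by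
  rcases abs_choice y with h | h
  · rw [h]
  · rw [h, ← binEntropy_one_sub]
    ring_nf

theorem artanh_le_div_sqrt_one_sub_sq {x : ℝ} (hx₀ : 0 ≤ x) (hx₁ : x < 1) :
    artanh x ≤ x / √(1 - x ^ 2) := by
  rw [← sinh_artanh ⟨by linarith, hx₁⟩, self_le_sinh_iff]
  exact artanh_nonneg hx₀

theorem hasDerivAt_sqrt_one_sub_sq {x : ℝ} (hx : 1 - x ^ 2 ≠ 0) :
    HasDerivAt (fun y ↦ √(1 - y ^ 2)) (-(x / √(1 - x ^ 2))) x := by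
  refine (((hasDerivAt_pow 2 x).const_sub 1).sqrt hx).congr_deriv ?_
  ring

theorem artanh_eq_half_log_sub_log {x : ℝ} (hx : x ∈ Ioo (-1) 1) :
    artanh x = 1 / 2 * (log (1 + x) - log (1 - x)) := by
  rw [artanh_eq_half_log (Ioo_subset_Icc_self hx),
    log_div (by linarith [hx.1]) (by linarith [hx.2])]

theorem hasDerivAt_binEntropy_one_sub_div_two {x : ℝ} (hx : x ∈ Ioo (-1) 1) :
    HasDerivAt (fun y ↦ binEntropy ((1 - y) / 2)) (-artanh x) x := by
  obtain ⟨hx₀, hx₁⟩ := hx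
  have inner : HasDerivAt (fun y : ℝ ↦ (1 - y) / 2) (-1 / 2) x :=
    ((hasDerivAt_id x).const_sub 1).div_const 2
  have outer : HasDerivAt binEntropy (log (1 - (1 - x) / 2) - log ((1 - x) / 2)) ((1 - x) / 2) :=
    hasDerivAt_binEntropy (by linarith) (by linarith)
  refine (outer.comp x inner).congr_deriv ?_
  rw [artanh_eq_half_log_sub_log ⟨hx₀, hx₁⟩, show 1 - (1 - x) / 2 = (1 + x) / 2 by ring,
    log_div (by linarith) two_ne_zero, log_div (by linarith) two_ne_zero]
  ring

theorem monotoneOn_binEntropy_one_sub_div_two_sub_sqrt :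
    MonotoneOn (fun y ↦ binEntropy ((1 - y) / 2) - √(1 - y ^ 2)) (Icc 0 1) := by
  have hasDerivAt_sub : ∀ x ∈ interior (Icc (0 : ℝ) 1),
      HasDerivAt (fun y ↦ binEntropy ((1 - y) / 2) - √(1 - y ^ 2))
        (-artanh x - -(x / √(1 - x ^ 2))) x := by
    rw [interior_Icc]
    rintro x ⟨hx₀, hx₁⟩
    exact (hasDerivAt_binEntropy_one_sub_div_two ⟨by linarith, hx₁⟩).sub
      (hasDerivAt_sqrt_one_sub_sq (by nlinarith))
  refine monotoneOn_of_hasDerivWithinAt_nonneg (convex_Icc 0 1)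
    (Continuous.continuousOn (by fun_prop)) (fun x hx ↦ (hasDerivAt_sub x hx).hasDerivWithinAt) ?_
  rw [interior_Icc]
  rintro x ⟨hx₀, hx₁⟩
  linarith [artanh_le_div_sqrt_one_sub_sq hx₀.le hx₁]

/-- For every `y ∈ [-1,1]`, `1 - √(1-y²) ≥ log 2 - H((1-y)/2)`. -/
theorem one_sub_sqrt_ge_log_two_sub_entropy (y : ℝ) (hy₁ : -1 ≤ y) (hy₂ : y ≤ 1) :
    1 - Real.sqrt (1 - y ^ 2) ≥ Real.log 2 - entH ((1 - y) / 2) := by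
  have value_zero_le : binEntropy ((1 - 0) / 2) - √(1 - 0 ^ 2) ≤
      binEntropy ((1 - |y|) / 2) - √(1 - |y| ^ 2) :=
    monotoneOn_binEntropy_one_sub_div_two_sub_sqrt (left_mem_Icc.2 zero_le_one)
      ⟨abs_nonneg y, abs_le.2 ⟨hy₁, hy₂⟩⟩ (abs_nonneg y)
  have value_zero : binEntropy ((1 - 0) / 2) - √(1 - 0 ^ 2) = log 2 - 1 := by simp
  rw [value_zero, binEntropy_one_sub_abs_div_two, sq_abs] at value_zero_le
  rw [entH_eq_binEntropy]
  linarith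
end

section
/- For every real r ≥ 0, one has (1 + r) log(1 + r) + r log r − (1 + 2r) log((1 + 2r)/2) ≤ 1 / (1 + 2r + 2√(r(1+r))), with the convention 0 · log 0 = 0. -/
/-!
With `a = 1 + r` and `b = r`, the right-hand side is `(√a - √b) ^ 2`, so the claim says that a
Jensen–Shannon gap is at most a squared Hellinger distance. Both sides vanish at `a = b`, and for
`b < a` their derivatives in `a` are `log (2 * a / (a + b))` and `1 - t` with `t = √(b / a)`.
The former is `-log ((1 + t ^ 2) / 2)`, so everything reduces to `exp (t - 1) ≤ (1 + t ^ 2) / 2`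
for `t ≤ 1`; here `(1 + t ^ 2) / 2` is the second Taylor polynomial of `exp (t - 1)` at `t = 1`.
-/

open Real Set

/-- The gap in Jensen's inequality for `x ↦ x * log x` at the midpoint of `a` and `b`, multiplied
by two. Summed over the atoms of two probability distributions it gives twice their
Jensen–Shannon divergence. -/
noncomputable def jensenShannonGap (a b : ℝ) : ℝ :=
  a * log a + b * log b - (a + b) * log ((a + b) / 2)

theorem exp_neg_le_quadratic_of_nonneg {s : ℝ} (hs : 0 ≤ s) : exp (-s) ≤ 1 - s + s ^ 2 / 2 := by
  have hpos : 0 < 1 + s + s ^ 2 / 2 := by positivity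
  calc exp (-s) = 1 / exp s := by rw [exp_neg, one_div]
    _ ≤ 1 / (1 + s + s ^ 2 / 2) := one_div_le_one_div_of_le hpos (quadratic_le_exp_of_nonneg hs)
    _ ≤ 1 - s + s ^ 2 / 2 := by
      rw [div_le_iff₀ hpos]
      have hprod : (1 - s + s ^ 2 / 2) * (1 + s + s ^ 2 / 2) = 1 + s ^ 4 / 4 := by ring
      rw [hprod]
      exact le_add_of_nonneg_right (by positivity)

theorem sub_one_le_log_one_add_sq_div_two {t : ℝ} (ht : t ≤ 1) :
    t - 1 ≤ log ((1 + t ^ 2) / 2) := by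
  rw [le_log_iff_exp_le (by positivity)]
  calc exp (t - 1) = exp (-(1 - t)) := by rw [neg_sub]
    _ ≤ 1 - (1 - t) + (1 - t) ^ 2 / 2 := exp_neg_le_quadratic_of_nonneg (sub_nonneg.2 ht)
    _ = (1 + t ^ 2) / 2 := by ring

theorem log_sub_log_midpoint_le {a b : ℝ} (ha : 0 < a) (hb : 0 ≤ b) (hba : b ≤ a) :
    log a - log ((a + b) / 2) ≤ 1 - √b / √a := by
  have hratio : √b / √a ≤ 1 := div_le_one_of_le₀ (sqrt_le_sqrt hba) (sqrt_nonneg a)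
  have hmid : (1 + (√b / √a) ^ 2) / 2 = (a + b) / 2 / a := by
    rw [div_pow, sq_sqrt hb, sq_sqrt ha.le]
    field_simp
  have hlog := sub_one_le_log_one_add_sq_div_two hratio
  rw [hmid, log_div (by positivity) ha.ne'] at hlog
  linarith

theorem hasDerivAt_sq_sqrt_sub {a : ℝ} (c : ℝ) (ha : 0 < a) :
    HasDerivAt (fun x ↦ (√x - c) ^ 2) (1 - c / √a) a := by
  have hsqrt : √a ≠ 0 := (sqrt_pos.2 ha).ne'
  refine (((hasDerivAt_sqrt ha.ne').sub_const c).fun_pow 2).congr_deriv ?_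
  rw [Nat.cast_ofNat, Nat.add_one_sub_one, pow_one]
  field_simp

namespace jensenShannonGap

theorem self_eq_zero (a : ℝ) : jensenShannonGap a a = 0 := by
  rw [jensenShannonGap, add_self_div_two]
  ring

theorem comm (a b : ℝ) : jensenShannonGap a b = jensenShannonGap b a := by
  simp only [jensenShannonGap, add_comm]

theorem eq_mul_log_midpoint (a b : ℝ) :
    jensenShannonGap a b =
      a * log a + b * log b - 2 * ((a + b) / 2 * log ((a + b) / 2)) := by
  rw [jensenShannonGap]
  ring

theorem continuous_left (b : ℝ) : Continuous fun a ↦ jensenShannonGap a b := by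
  have hmid : Continuous fun a : ℝ ↦ (a + b) / 2 * log ((a + b) / 2) :=
    continuous_mul_log.comp (by fun_prop : Continuous fun a : ℝ ↦ (a + b) / 2)
  simp only [eq_mul_log_midpoint]
  exact (continuous_mul_log.add continuous_const).sub (hmid.const_mul 2)

theorem hasDerivAt_left {a b : ℝ} (ha : a ≠ 0) (hab : a + b ≠ 0) :
    HasDerivAt (fun x ↦ jensenShannonGap x b) (log a - log ((a + b) / 2)) a := by
  have hmid : HasDerivAt (fun x : ℝ ↦ (x + b) / 2) (1 / 2) a :=
    ((hasDerivAt_id a).add_const b).div_const 2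
  have hmul_log := (hasDerivAt_mul_log (div_ne_zero hab two_ne_zero)).comp a hmid
  simp only [eq_mul_log_midpoint]
  refine (((hasDerivAt_mul_log ha).add_const (b * log b)).sub
    (hmul_log.const_mul 2)).congr_deriv ?_
  ring

theorem monotoneOn_sq_sqrt_sub_sqrt_sub {b : ℝ} (hb : 0 ≤ b) :
    MonotoneOn (fun a ↦ (√a - √b) ^ 2 - jensenShannonGap a b) (Ici b) := by
  have hderiv : ∀ a ∈ interior (Ici b),
      HasDerivAt (fun x ↦ (√x - √b) ^ 2 - jensenShannonGap x b)
        (1 - √b / √a - (log a - log ((a + b) / 2))) a := by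
    intro a ha
    rw [interior_Ici] at ha
    have ha0 : 0 < a := hb.trans_lt ha
    exact (hasDerivAt_sq_sqrt_sub (√b) ha0).sub (hasDerivAt_left ha0.ne' (by positivity))
  have hcont : Continuous fun a ↦ (√a - √b) ^ 2 - jensenShannonGap a b :=
    (by fun_prop : Continuous fun a : ℝ ↦ (√a - √b) ^ 2).sub (continuous_left b)
  refine monotoneOn_of_hasDerivWithinAt_nonneg (convex_Ici b) hcont.continuousOn
    (fun a ha ↦ (hderiv a ha).hasDerivWithinAt) fun a ha ↦ ?_
  rw [interior_Ici] at ha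
  exact sub_nonneg.2 (log_sub_log_midpoint_le (hb.trans_lt ha) hb (le_of_lt ha))

theorem le_sq_sqrt_sub_sqrt {a b : ℝ} (ha : 0 ≤ a) (hb : 0 ≤ b) :
    jensenShannonGap a b ≤ (√a - √b) ^ 2 := by
  wlog hba : b ≤ a generalizing a b
  · rw [comm, sub_sq_comm]
    exact this hb ha (le_of_not_ge hba)
  have hmono := monotoneOn_sq_sqrt_sub_sqrt_sub hb self_mem_Ici hba hba
  simpa only [self_eq_zero, sub_self, zero_pow two_ne_zero, sub_nonneg] using hmono

end jensenShannonGap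

theorem sq_sqrt_one_add_sub_sqrt {r : ℝ} (hr : 0 ≤ r) :
    (√(1 + r) - √r) ^ 2 = 1 / (1 + 2 * r + 2 * √(r * (1 + r))) := by
  have hr1 : 0 ≤ 1 + r := by positivity
  have hconj : (√(1 + r) - √r) * (√(1 + r) + √r) = 1 := by
    rw [mul_comm, ← sq_sub_sq, sq_sqrt hr1, sq_sqrt hr, add_sub_cancel_right]
  have hden : 1 + 2 * r + 2 * √(r * (1 + r)) = (√(1 + r) + √r) ^ 2 := by
    rw [add_sq, sq_sqrt hr1, sq_sqrt hr, sqrt_mul hr]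
    ring
  rw [hden, eq_div_iff (by positivity), ← mul_pow, hconj, one_pow]

/-- For every `r ≥ 0`,
`(1+r)log(1+r) + r log r - (1+2r)log((1+2r)/2) ≤ 1/(1 + 2r + 2√(r(1+r)))`
(the convention `0 · log 0 = 0` holds since `Real.log 0 = 0`). -/
theorem technical_inequality (r : ℝ) (hr : 0 ≤ r) :
    (1 + r) * Real.log (1 + r) + r * Real.log r -
        (1 + 2 * r) * Real.log ((1 + 2 * r) / 2) ≤
      1 / (1 + 2 * r + 2 * Real.sqrt (r * (1 + r))) := by
  have hsum : 1 + 2 * r = 1 + r + r := by ring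
  calc (1 + r) * Real.log (1 + r) + r * Real.log r - (1 + 2 * r) * Real.log ((1 + 2 * r) / 2)
      = jensenShannonGap (1 + r) r := by rw [jensenShannonGap, hsum]
    _ ≤ (√(1 + r) - √r) ^ 2 := jensenShannonGap.le_sq_sqrt_sub_sqrt (by positivity) hr
    _ = 1 / (1 + 2 * r + 2 * √(r * (1 + r))) := sq_sqrt_one_add_sub_sqrt hr
end

section
/- As r → ∞, one has (1 + 2r + 2√(r(1+r))) · ( (1 + r) log(1 + r) + r log r − (1 + 2r) log((1 + 2r)/2) ) → 1. -/
/-!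
With `f x = x * log x`, the logarithmic factor is `f (r + 1) - 2 * f (r + 1/2) + f r`, the second
forward difference of `f` at `r` with step `1/2`. By the mean value theorem it equals
`(1/2)² * f'' ξ = 1 / (4 * ξ)` for some `ξ` between `r` and `r + 1`, so it is asymptotic to
`1 / (4 * r)`, while the algebraic factor is asymptotic to `4 * r`.
-/

open Filter Set Topology

theorem exists_fwdDiff_iter_eq_pow_mul {F : ℕ → ℝ → ℝ} {h y : ℝ} {n : ℕ} (hh : 0 < h)
    (hF : ∀ k < n, ∀ x ∈ Icc y (y + n * h), HasDerivAt (F k) (F (k + 1) x) x) :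
    ∃ ξ ∈ Icc y (y + n * h), (fwdDiff h)^[n] (F 0) y = h ^ n * F n ξ := by
  induction n generalizing F with
  | zero => exact ⟨y, by simp, by simp⟩
  | succ n ih =>
    push_cast at hF ⊢
    have mem_add {x t : ℝ} (hx : x ∈ Icc y (y + n * h)) (ht : t ∈ Icc x (x + h)) :
        t ∈ Icc y (y + (n + 1) * h) :=
      ⟨hx.1.trans ht.1, by linarith [hx.2, ht.2]⟩
    have hasDerivAt_fwdDiff : ∀ k < n, ∀ x ∈ Icc y (y + n * h),
        HasDerivAt (fwdDiff h (F k)) (fwdDiff h (F (k + 1)) x) x := fun k hk x hx ↦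
      ((hF k (by lia) (x + h) (mem_add hx (by simp [hh.le]))).comp_add_const x h).sub
        (hF k (by lia) x (mem_add hx (by simp [hh.le])))
    obtain ⟨η, hη, hΔ⟩ := ih (F := fun k ↦ fwdDiff h (F k)) hasDerivAt_fwdDiff
    have hFn : ∀ x ∈ Icc η (η + h), HasDerivAt (F n) (F (n + 1) x) x := fun x hx ↦
      hF n n.lt_succ_self x (mem_add hη hx)
    obtain ⟨ξ, hξ, hslope⟩ := exists_hasDerivAt_eq_slope (F n) (F (n + 1))
      (lt_add_of_pos_right η hh) (HasDerivAt.continuousOn hFn)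
      fun x hx ↦ hFn x (Ioo_subset_Icc_self hx)
    refine ⟨ξ, mem_add hη (Ioo_subset_Icc_self hξ), ?_⟩
    rw [Function.iterate_succ_apply, hΔ, hslope, fwdDiff, add_sub_cancel_left, pow_succ]
    field_simp

theorem fwdDiff_two_mul_log_mem_Icc {h y : ℝ} (hh : 0 < h) (hy : 0 < y) :
    (fwdDiff h)^[2] (fun x ↦ x * Real.log x) y ∈ Icc (h ^ 2 / (y + 2 * h)) (h ^ 2 / y) := by
  let F : ℕ → ℝ → ℝ
    | 0 => fun x ↦ x * Real.log x
    | 1 => fun x ↦ Real.log x + 1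
    | _ => fun x ↦ x⁻¹
  have hF : ∀ k < 2, ∀ x ∈ Icc y (y + (2 : ℕ) * h), HasDerivAt (F k) (F (k + 1) x) x := by
    intro k hk x hx
    have hx0 : x ≠ 0 := (hy.trans_le hx.1).ne'
    interval_cases k
    · exact Real.hasDerivAt_mul_log hx0
    · exact (Real.hasDerivAt_log hx0).add_const 1
  obtain ⟨ξ, ⟨hyξ, hξy⟩, hΔ⟩ := exists_fwdDiff_iter_eq_pow_mul hh hF
  have hξ : 0 < ξ := hy.trans_le hyξ
  push_cast at hξy
  have hΔ_eq_div : (fwdDiff h)^[2] (fun x ↦ x * Real.log x) y = h ^ 2 / ξ :=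
    hΔ.trans (div_eq_mul_inv _ _).symm
  rw [hΔ_eq_div]
  exact ⟨by gcongr, by gcongr⟩

theorem tendsto_add_const_div_self_atTop (c : ℝ) :
    Tendsto (fun x : ℝ ↦ (x + c) / x) atTop (𝓝 1) := by
  have hlim : Tendsto (fun x : ℝ ↦ 1 + c / x) atTop (𝓝 (1 + 0)) :=
    tendsto_const_nhds.add (tendsto_id.const_div_atTop c)
  rw [add_zero] at hlim
  refine hlim.congr' ?_
  filter_upwards [eventually_ne_atTop 0] with x hx
  rw [add_div, div_self hx]

theorem tendsto_mul_fwdDiff_two_mul_log_atTop {h : ℝ} (hh : 0 < h) :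
    Tendsto (fun y ↦ y * (fwdDiff h)^[2] (fun x ↦ x * Real.log x) y) atTop (𝓝 (h ^ 2)) := by
  have hlower : Tendsto (fun y ↦ h ^ 2 / ((y + 2 * h) / y)) atTop (𝓝 (h ^ 2)) := by
    simpa only [div_one] using!
      tendsto_const_nhds.div (tendsto_add_const_div_self_atTop (2 * h)) one_ne_zero
  refine tendsto_of_tendsto_of_tendsto_of_le_of_le' hlower tendsto_const_nhds ?_ ?_
  · filter_upwards [eventually_gt_atTop 0] with y hy
    calc h ^ 2 / ((y + 2 * h) / y) = y * (h ^ 2 / (y + 2 * h)) := by field_simp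
      _ ≤ _ := by gcongr; exact (fwdDiff_two_mul_log_mem_Icc hh hy).1
  · filter_upwards [eventually_gt_atTop 0] with y hy
    calc _ ≤ y * (h ^ 2 / y) := by gcongr; exact (fwdDiff_two_mul_log_mem_Icc hh hy).2
      _ = h ^ 2 := by field_simp

theorem tendsto_sqrt_mul_const_add_div_self_atTop (c : ℝ) :
    Tendsto (fun x ↦ √(x * (c + x)) / x) atTop (𝓝 1) := by
  have hlim := (tendsto_add_const_div_self_atTop c).sqrt
  rw [Real.sqrt_one] at hlim
  refine hlim.congr' ?_
  filter_upwards [eventually_gt_atTop 0] with x hx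
  calc √((x + c) / x) = √(x * (c + x) / x ^ 2) := by congr 1; field_simp; ring
    _ = √(x * (c + x)) / x := by rw [Real.sqrt_div' _ (sq_nonneg x), Real.sqrt_sq hx.le]

/-- As `r → ∞`,
`(1 + 2r + 2√(r(1+r))) · ((1+r)log(1+r) + r log r - (1+2r)log((1+2r)/2)) → 1`. -/
theorem technical_limit :
    Filter.Tendsto
      (fun r : ℝ => (1 + 2 * r + 2 * Real.sqrt (r * (1 + r))) *
        ((1 + r) * Real.log (1 + r) + r * Real.log r -
          (1 + 2 * r) * Real.log ((1 + 2 * r) / 2)))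
      Filter.atTop (nhds 1) := by
  have halgebraic : Tendsto (fun r : ℝ ↦ (r + 1) / r + 1 + 2 * (√(r * (1 + r)) / r)) atTop
      (𝓝 (1 + 1 + 2 * 1)) :=
    ((tendsto_add_const_div_self_atTop 1).add_const 1).add
      ((tendsto_sqrt_mul_const_add_div_self_atTop 1).const_mul 2)
  have hlogarithmic := tendsto_mul_fwdDiff_two_mul_log_atTop (one_half_pos (α := ℝ))
  have hlim := halgebraic.mul hlogarithmic
  rw [show (1 + 1 + 2 * 1) * (1 / 2) ^ 2 = (1 : ℝ) by norm_num] at hlim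
  refine hlim.congr' ?_
  filter_upwards [eventually_ne_atTop 0] with r hr
  have hmid : r + 1 / 2 = (1 + 2 * r) / 2 := by ring
  have hright : (1 + 2 * r) / 2 + 1 / 2 = 1 + r := by ring
  simp only [Function.iterate_succ_apply, Function.iterate_zero_apply, fwdDiff, hmid, hright]
  field_simp
  ring
end
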